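/- arXiv:1308.2765 — 3 statements merged into one kernel-verified Lean document; each statement's English description precedes it below -/
import Mathlib

section
/- Let d, n be positive integers with n ≥ 2, let ν > 0 and a = ν − d/2 − 1, and let q : (0,1) → (0,∞) be such that all integrals below are finite. Then for every y, x̄_n ∈ ℝ^d and s_n > 0, the Bayesian predictive density with respect to the Gaussian-mixture prior π_GM satisfies p̂_{π_GM}(y | x̄_n, s_n) = c_B · (s_{n+1}/s_n)^{−ν} · (J_{n+1}/J_n) · p̂_R(y | x̄_n, s_n), where x̄_{n+1} = (n x̄_n + y)/(n+1), s_{n+1} = s_n + n‖y − x̄_n‖²/(n+1), c_B = (1 + 1/n)^ν B(ν, (n−1)d/2)/B(ν, nd/2) with B the Beta function, and for l ∈ {n, n+1}, J_l = ∫_0^1 λ^{ν−1} (1 + (l−1)λ)^{d/2−ν−1} (1 + w_l λ)^{−(l−1)d/2−ν} q(lλ/(1 + (l−1)λ)) dλ with w_l = l‖x̄_l‖²/s_l. -/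
/-!
Both the numerator and the denominator of the predictive density are integrals of one and the same
kernel. For sample size `l`, mean `z` and scale statistic `v`, this kernel is the product of
`φ(z; μ, 1/(lη))`, `η ^ ((l - 1) d / 2) exp (-η v / 2)` and the integrand of the mixture prior.
For the denominator `(l, z, v) = (n, x̄, s)`. For the numerator `(l, z, v)` is the statistic updated
by the extra observation `y`: the identity
`‖y - μ‖² + n ‖x̄ - μ‖² = (n + 1) ‖m - μ‖² + n ‖y - x̄‖² / (n + 1)`, with `m` the
updated mean (`sq_norm_update`), turns the product of the two likelihoods into a single
Gaussian likelihood (`gaussPdf_update`).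

The kernel is integrated in closed form in `integral_kernel`. Joint integrability allows the mixing
weight to be integrated last (`integral_rotate`). The mean is removed by a convolution of Gaussians
(`integral_gaussPdf_mul`) and the precision by a Gamma integral (`integral_precision_mean`). The
substitution `λ = l t / (1 + (l - 1) t)` (`integral_mobius`) then makes the remaining integral
equal to `J_l`, up to the factor
`(2π)^(-d/2) Γ((l - 1) d / 2 + ν) (v / 2)^(-((l - 1) d / 2 + ν)) l^ν`.
Dividing the two closed forms and collecting powers gives the result. If `J_n` were zero, both
sides would be zero by the convention for division.
-/

open MeasureTheory Set

noncomputable section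

abbrev Euc (d : ℕ) := EuclideanSpace ℝ (Fin d)

/-- Isotropic `d`-variate Gaussian density with mean `θ` and covariance `τ I_d`. -/
def gaussPdf (d : ℕ) (z θ : Euc d) (τ : ℝ) : ℝ :=
  (2 * Real.pi * τ) ^ (-(d : ℝ) / 2) * Real.exp (-‖z - θ‖ ^ 2 / (2 * τ))

/-- Chi-square density with `k` degrees of freedom. -/
def chiSqPdf (k t : ℝ) : ℝ :=
  t ^ (k / 2 - 1) * Real.exp (-t / 2) / ((2 : ℝ) ^ (k / 2) * Real.Gamma (k / 2))

/-- Numerator of the Bayesian predictive density. -/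
def bayesPredNum (d n : ℕ) (pr : Euc d → ℝ → ℝ) (y xbar : Euc d) (s : ℝ) : ℝ :=
  ∫ η in Ioi (0 : ℝ), ∫ μ, gaussPdf d y μ η⁻¹ * gaussPdf d xbar μ (((n : ℝ) * η)⁻¹) * η *
    chiSqPdf (((n : ℝ) - 1) * d) (η * s) * pr μ η

/-- Denominator of the Bayesian predictive density. -/
def bayesPredDen (d n : ℕ) (pr : Euc d → ℝ → ℝ) (xbar : Euc d) (s : ℝ) : ℝ :=
  ∫ η in Ioi (0 : ℝ), ∫ μ, gaussPdf d xbar μ (((n : ℝ) * η)⁻¹) * η *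
    chiSqPdf (((n : ℝ) - 1) * d) (η * s) * pr μ η

/-- Bayesian predictive density with respect to the prior `pr`. -/
def bayesPred (d n : ℕ) (pr : Euc d → ℝ → ℝ) (y xbar : Euc d) (s : ℝ) : ℝ :=
  bayesPredNum d n pr y xbar s / bayesPredDen d n pr xbar s

/-- Best equivariant predictive density. -/
def bestEquiv (d n : ℕ) (y xbar : Euc d) (s : ℝ) : ℝ :=
  (Real.Gamma ((n : ℝ) * d / 2) / Real.Gamma (((n : ℝ) - 1) * d / 2)) *
    ((n : ℝ) / (((n : ℝ) + 1) * Real.pi * s)) ^ ((d : ℝ) / 2) *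
    (1 + ((n : ℝ) / (((n : ℝ) + 1) * s)) * ‖y - xbar‖ ^ 2) ^ (-((n : ℝ) * d) / 2)

/-- Marginal density `m_π(z, v; l)`. -/
def marginalDens (d : ℕ) (pr : Euc d → ℝ → ℝ) (l : ℕ) (z : Euc d) (v : ℝ) : ℝ :=
  ∫ η in Ioi (0 : ℝ), ∫ μ, gaussPdf d z μ (((l : ℝ) * η)⁻¹) * η *
    chiSqPdf (((l : ℝ) - 1) * d) (η * v) * pr μ η

/-- `ρ_π(z, v; l) = v · m_π(z, v; l)`. -/
def rhoDens (d : ℕ) (pr : Euc d → ℝ → ℝ) (l : ℕ) (z : Euc d) (v : ℝ) : ℝ :=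
  v * marginalDens d pr l z v

/-- Kullback–Leibler risk of a predictive density `p`. -/
def klRisk (d n : ℕ) (μ0 : Euc d) (σ2 : ℝ) (p : Euc d → Euc d → ℝ → ℝ) : ℝ :=
  ∫ s in Ioi (0 : ℝ), ∫ xbar, gaussPdf d xbar μ0 (σ2 / n) *
    (chiSqPdf (((n : ℝ) - 1) * d) (s / σ2) / σ2) *
    ∫ y, gaussPdf d y μ0 σ2 * Real.log (gaussPdf d y μ0 σ2 / p y xbar s)

/-- Gaussian-mixture prior `π_GM` built from `q` with shape parameter `ν` (`a = ν - d/2 - 1`). -/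
def gmPrior (d : ℕ) (ν : ℝ) (q : ℝ → ℝ) (μ : Euc d) (η : ℝ) : ℝ :=
  ∫ l in Ioo (0 : ℝ) 1, gaussPdf d μ 0 (η⁻¹ * l⁻¹ * (1 - l)) *
    η ^ (ν - (d : ℝ) / 2 - 1) * l ^ (ν - (d : ℝ) / 2 - 1) * q l

/-- The Beta function. -/
def betaFun (a b : ℝ) : ℝ := Real.Gamma a * Real.Gamma b / Real.Gamma (a + b)

/-- Digamma function. -/
def digamma (x : ℝ) : ℝ := deriv (fun y => Real.log (Real.Gamma y)) x

/-- The function `g(n, d, ν)`. -/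
def gFun (n d : ℕ) (ν : ℝ) : ℝ :=
  if d ≤ n then
    (1 / ν) * Real.log (betaFun ν ((n : ℝ) * d / 2 - ((d : ℝ) - ν) / n) / betaFun ν ((n : ℝ) * d / 2))
  else
    (1 / ((n : ℝ) * ν)) * (((d : ℝ) - ν) / ((n : ℝ) * d / 2 - 1)) * Real.log (1 + ν)

/-- The function `h(n, d)`. -/
def hFun (n d : ℕ) : ℝ :=
  ((1 + ((n : ℝ) + 1) * d / 2) / ((n : ℝ) * d / 2)) *
    (digamma (1 + ((n : ℝ) + 1) * d / 2) - digamma (1 + (n : ℝ) * d / 2))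

/-- The particular function `q` of equation (5) of the paper. -/
def qLow (d n : ℕ) (ν : ℝ) (l : ℝ) : ℝ :=
  (1 - l) ^ (((n : ℝ) - 1) * d / 2 - 1) *
    (1 - ((n : ℝ) - 1) * l / n) ^ (-(((n : ℝ) - 2) * d / 2) - ν)

/-- The quantity `J_l`. -/
def Jquant (d : ℕ) (ν : ℝ) (q : ℝ → ℝ) (l w : ℝ) : ℝ :=
  ∫ t in Ioo (0 : ℝ) 1, t ^ (ν - 1) * (1 + (l - 1) * t) ^ ((d : ℝ) / 2 - ν - 1) *
    (1 + w * t) ^ (-((l - 1) * (d : ℝ) / 2) - ν) * q (l * t / (1 + (l - 1) * t))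

/-- The statistic `x̄_{n+1} = (n x̄_n + y)/(n+1)`. -/
def newMean {d : ℕ} (n : ℕ) (xbar y : Euc d) : Euc d :=
  (((n : ℝ) + 1)⁻¹) • ((n : ℝ) • xbar + y)

/-- The statistic `s_{n+1} = s_n + n ‖y - x̄_n‖² / (n+1)`. -/
def newS {d : ℕ} (n : ℕ) (xbar y : Euc d) (s : ℝ) : ℝ :=
  s + (n : ℝ) * ‖y - xbar‖ ^ 2 / ((n : ℝ) + 1)

/-- `w_l = l ‖x̄_l‖² / s_l`. -/
def wStat {d : ℕ} (l : ℝ) (z : Euc d) (v : ℝ) : ℝ := l * ‖z‖ ^ 2 / v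

/-- `u_l = w_l / (1 + w_l)`. -/
def uStat {d : ℕ} (l : ℝ) (z : Euc d) (v : ℝ) : ℝ :=
  wStat l z v / (1 + wStat l z v)

/-- Expectation with respect to the joint density of `(x̄_n, s_n, y)`. -/
def expVal (d n : ℕ) (μ0 : Euc d) (σ2 : ℝ) (f : Euc d → ℝ → Euc d → ℝ) : ℝ :=
  ∫ s in Ioi (0 : ℝ), ∫ xbar, ∫ y,
    gaussPdf d xbar μ0 (σ2 / n) * (chiSqPdf (((n : ℝ) - 1) * d) (s / σ2) / σ2) *
      gaussPdf d y μ0 σ2 * f xbar s y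

/-- Expectation with respect to the joint density of `(x̄_n, s_n)`. -/
def expVal2 (d n : ℕ) (μ0 : Euc d) (σ2 : ℝ) (f : Euc d → ℝ → ℝ) : ℝ :=
  ∫ s in Ioi (0 : ℝ), ∫ xbar, gaussPdf d xbar μ0 (σ2 / n) *
    (chiSqPdf (((n : ℝ) - 1) * d) (s / σ2) / σ2) * f xbar s

/-! ### Order of integration -/

/-- Iterated integrals of a jointly integrable function of three variables may be reordered so
that the last variable is integrated outermost. -/
lemma integral_rotate {α β γ : Type*} [MeasurableSpace α] [MeasurableSpace β] [MeasurableSpace γ]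
    {ρ : Measure α} {σ : Measure β} {τ : Measure γ} [SFinite ρ] [SFinite σ] [SFinite τ]
    {f : α × β × γ → ℝ} (hf : Integrable f (ρ.prod (σ.prod τ))) :
    ∫ a, ∫ b, ∫ c, f (a, b, c) ∂τ ∂σ ∂ρ = ∫ c, ∫ a, ∫ b, f (a, b, c) ∂σ ∂ρ ∂τ := by
  have hmp := measurePreserving_prodAssoc ρ σ τ
  have hg : Integrable (f ∘ MeasurableEquiv.prodAssoc) ((ρ.prod σ).prod τ) :=
    hmp.integrable_comp_of_integrable hf
  calc ∫ a, ∫ b, ∫ c, f (a, b, c) ∂τ ∂σ ∂ρ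
      = ∫ a, ∫ p, f (a, p) ∂(σ.prod τ) ∂ρ := by
        refine integral_congr_ae ?_
        filter_upwards [hf.prod_right_ae] with a ha
        exact (integral_prod _ ha).symm
    _ = ∫ x, f x ∂(ρ.prod (σ.prod τ)) := (integral_prod _ hf).symm
    _ = ∫ x, (f ∘ MeasurableEquiv.prodAssoc) x ∂((ρ.prod σ).prod τ) :=
        (hmp.integral_comp' f).symm
    _ = ∫ c, ∫ p, (f ∘ MeasurableEquiv.prodAssoc) (p, c) ∂(ρ.prod σ) ∂τ :=
        integral_prod_symm _ hg
    _ = ∫ c, ∫ a, ∫ b, f (a, b, c) ∂σ ∂ρ ∂τ := by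
        refine integral_congr_ae ?_
        filter_upwards [hg.prod_left_ae] with c hc
        exact integral_prod _ hc

/-! ### Gaussian integrals -/

lemma integral_gaussPdf (d : ℕ) (θ : Euc d) {τ : ℝ} (hτ : 0 < τ) :
    ∫ μ, gaussPdf d μ θ τ = 1 := by
  unfold gaussPdf
  rw [integral_const_mul,
    integral_sub_right_eq_self (fun μ : Euc d => Real.exp (-‖μ‖ ^ 2 / (2 * τ))) θ]
  have h := GaussianFourier.integral_rexp_neg_mul_sq_norm (V := Euc d)
    (b := 1 / (2 * τ)) (by positivity)
  have e : ∀ μ : Euc d, Real.exp (-‖μ‖ ^ 2 / (2 * τ)) = Real.exp (-(1 / (2 * τ)) * ‖μ‖ ^ 2) := by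
    intro μ; congr 1; ring
  simp_rw [e]
  rw [h, finrank_euclideanSpace_fin, show Real.pi / (1 / (2 * τ)) = 2 * Real.pi * τ by
    field_simp, ← Real.rpow_add (by positivity)]
  simp [neg_div]

/-- Completing the square: the joint density of a Gaussian mean and a Gaussian observation factors
into the marginal of the observation and the posterior of the mean. -/
lemma gaussPdf_mul_gaussPdf (d : ℕ) (z μ : Euc d) {σ τ : ℝ} (hσ : 0 < σ) (hτ : 0 < τ) :
    gaussPdf d z μ σ * gaussPdf d μ 0 τ =
      gaussPdf d z 0 (σ + τ) * gaussPdf d μ ((τ / (σ + τ)) • z) (σ * τ / (σ + τ)) := by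
  unfold gaussPdf
  have hpow : (2 * Real.pi * σ) ^ (-(d : ℝ) / 2) * (2 * Real.pi * τ) ^ (-(d : ℝ) / 2) =
      (2 * Real.pi * (σ + τ)) ^ (-(d : ℝ) / 2) *
        (2 * Real.pi * (σ * τ / (σ + τ))) ^ (-(d : ℝ) / 2) := by
    rw [← Real.mul_rpow (by positivity) (by positivity),
      ← Real.mul_rpow (by positivity) (by positivity)]
    congr 1
    field_simp
  have hexp : Real.exp (-‖z - μ‖ ^ 2 / (2 * σ)) * Real.exp (-‖μ - 0‖ ^ 2 / (2 * τ)) =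
      Real.exp (-‖z - 0‖ ^ 2 / (2 * (σ + τ))) *
        Real.exp (-‖μ - (τ / (σ + τ)) • z‖ ^ 2 / (2 * (σ * τ / (σ + τ)))) := by
    rw [← Real.exp_add, ← Real.exp_add, sub_zero, sub_zero, norm_sub_sq_real, norm_sub_sq_real μ,
      inner_smul_right, norm_smul, mul_pow, Real.norm_eq_abs, sq_abs, real_inner_comm μ z]
    congr 1
    field_simp
    ring
  rw [mul_mul_mul_comm, hpow, hexp, mul_mul_mul_comm]

lemma integral_gaussPdf_mul (d : ℕ) (z : Euc d) {σ τ : ℝ} (hσ : 0 < σ) (hτ : 0 < τ) :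
    ∫ μ, gaussPdf d z μ σ * gaussPdf d μ 0 τ = gaussPdf d z 0 (σ + τ) := by
  simp_rw [gaussPdf_mul_gaussPdf d z _ hσ hτ]
  rw [integral_const_mul, integral_gaussPdf d _ (by positivity), mul_one]

/-! ### Closed form of the kernel integral -/

/-- Change of variables `λ = l t / (1 + (l - 1) t)`, a bijection of the unit interval. -/
lemma integral_mobius {l : ℝ} (hl : 0 < l) (g : ℝ → ℝ) :
    ∫ x in Ioo (0 : ℝ) 1, g x =
      ∫ t in Ioo (0 : ℝ) 1, l / (1 + (l - 1) * t) ^ 2 * g (l * t / (1 + (l - 1) * t)) := by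
  have hpos : ∀ t ∈ Ioo (0 : ℝ) 1, 0 < 1 + (l - 1) * t := by
    intro t ht
    nlinarith [ht.1, ht.2, mul_pos hl ht.1]
  have himg : (fun t : ℝ => l * t / (1 + (l - 1) * t)) '' Ioo 0 1 = Ioo 0 1 := by
    ext x
    constructor
    · rintro ⟨t, ht, rfl⟩
      have := hpos t ht
      refine ⟨div_pos (mul_pos hl ht.1) this, ?_⟩
      rw [div_lt_one this]
      linarith [ht.2]
    · intro hx
      have h1 : 0 < l - (l - 1) * x := by nlinarith [hx.1, hx.2, mul_pos hl (sub_pos.2 hx.2)]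
      refine ⟨x / (l - (l - 1) * x), ⟨div_pos hx.1 h1, ?_⟩, ?_⟩
      · rw [div_lt_one h1]
        nlinarith [mul_pos hl (sub_pos.2 hx.2)]
      · have h2 : 1 + (l - 1) * (x / (l - (l - 1) * x)) = l / (l - (l - 1) * x) := by
          field_simp; ring
        simp only [h2]
        rw [mul_div_assoc', div_div_div_cancel_right₀ h1.ne', mul_div_cancel_left₀ _ hl.ne']
  have hinj : InjOn (fun t : ℝ => l * t / (1 + (l - 1) * t)) (Ioo 0 1) := by
    intro t ht u hu h
    have h1 := hpos t ht
    have h2 := hpos u hu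
    simp only at h
    rw [div_eq_div_iff h1.ne' h2.ne'] at h
    have : l * (t - u) = 0 := by linear_combination h
    rcases mul_eq_zero.1 this with h | h
    · exact absurd h hl.ne'
    · linarith
  have hder : ∀ t ∈ Ioo (0 : ℝ) 1, HasDerivWithinAt (fun t : ℝ => l * t / (1 + (l - 1) * t))
      (l / (1 + (l - 1) * t) ^ 2) (Ioo 0 1) t := by
    intro t ht
    have h1 := hpos t ht
    have := (((hasDerivAt_id t).const_mul l).div
      (((hasDerivAt_id t).const_mul (l - 1)).const_add 1) h1.ne').hasDerivWithinAt (s := Ioo 0 1)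
    refine this.congr_deriv ?_
    simp only [id]
    congr 1
    ring
  rw [← himg, integral_image_eq_integral_abs_deriv_smul measurableSet_Ioo hder hinj, himg]
  refine setIntegral_congr_fun measurableSet_Ioo fun t ht => ?_
  have h1 := hpos t ht
  simp only [smul_eq_mul]
  rw [abs_of_pos (by positivity)]

/-- For a fixed mixing weight `x`, integrating out the mean and then the precision. Here
`A = l x / (l - (l - 1) x)` is the precision (relative to `η`) of the marginal law of `z`. -/
lemma integral_precision_mean (d : ℕ) (z : Euc d) {l v ν κ x : ℝ} (hl : 0 < l) (hv : 0 < v)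
    (hκ : 0 < κ + ν) (hx : x ∈ Ioo (0 : ℝ) 1) :
    ∫ η in Ioi (0 : ℝ), ∫ μ, gaussPdf d z μ ((l * η)⁻¹) * gaussPdf d μ 0 (η⁻¹ * x⁻¹ * (1 - x)) *
        (η ^ (κ + ν - d / 2 - 1) * Real.exp (-(η * v) / 2)) =
      (2 * Real.pi) ^ (-(d : ℝ) / 2) * (l * x / (l - (l - 1) * x)) ^ ((d : ℝ) / 2) *
        (Real.Gamma (κ + ν) *
          ((v + l * x / (l - (l - 1) * x) * ‖z‖ ^ 2) / 2) ^ (-(κ + ν))) := by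
  have h1 : 0 < l - (l - 1) * x := by nlinarith [hx.1, hx.2, mul_pos hl (sub_pos.2 hx.2)]
  have hx0 := hx.1
  have hx1 := sub_pos.2 hx.2
  set A := l * x / (l - (l - 1) * x) with hA
  have hApos : 0 < A := by positivity
  have key : ∀ η ∈ Ioi (0 : ℝ), ∫ μ, gaussPdf d z μ ((l * η)⁻¹) *
      gaussPdf d μ 0 (η⁻¹ * x⁻¹ * (1 - x)) * (η ^ (κ + ν - d / 2 - 1) * Real.exp (-(η * v) / 2)) =
      (2 * Real.pi) ^ (-(d : ℝ) / 2) * A ^ ((d : ℝ) / 2) *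
        (η ^ (κ + ν - 1) * Real.exp (-((v + A * ‖z‖ ^ 2) / 2 * η))) := by
    intro η hη
    have hη : 0 < η := hη
    rw [integral_mul_const, integral_gaussPdf_mul d z (by positivity) (by positivity)]
    have e : (l * η)⁻¹ + η⁻¹ * x⁻¹ * (1 - x) = (η * A)⁻¹ := by
      rw [hA]; field_simp; ring
    rw [e]
    unfold gaussPdf
    have e2 : (2 * Real.pi * (η * A)⁻¹) ^ (-(d : ℝ) / 2) =
        (2 * Real.pi) ^ (-(d : ℝ) / 2) * (η ^ ((d : ℝ) / 2) * A ^ ((d : ℝ) / 2)) := by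
      rw [Real.mul_rpow (by positivity) (by positivity), Real.inv_rpow (by positivity), neg_div,
        Real.rpow_neg (by positivity) (y := (d : ℝ) / 2) (x := η * A), inv_inv,
        Real.mul_rpow hη.le hApos.le]
    have e3 : η ^ (κ + ν - 1) = η ^ ((d : ℝ) / 2) * η ^ (κ + ν - d / 2 - 1) := by
      rw [← Real.rpow_add hη]; congr 1; ring
    have e4 : Real.exp (-((v + A * ‖z‖ ^ 2) / 2 * η)) =
        Real.exp (-‖z - 0‖ ^ 2 / (2 * (η * A)⁻¹)) * Real.exp (-(η * v) / 2) := by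
      rw [← Real.exp_add, sub_zero]; congr 1; field_simp; ring
    rw [e2, e3, e4]; ring
  rw [setIntegral_congr_fun measurableSet_Ioi key, integral_const_mul,
    Real.integral_rpow_mul_exp_neg_mul_Ioi hκ (by positivity), one_div,
    Real.inv_rpow (by positivity), ← Real.rpow_neg (by positivity)]
  ring

/-- The closed form shared by the numerator and the denominator of the predictive density: both
integrands are, up to a constant `C`, the Gaussian-mixture posterior kernel with sample size `l`,
mean `z` and scale statistic `v`. -/
lemma integral_kernel (d : ℕ) (z : Euc d) {l v ν : ℝ} (C : ℝ) (q : ℝ → ℝ) (hl : 1 ≤ l)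
    (hv : 0 < v) (hν : 0 < ν) {f : ℝ × Euc d × ℝ → ℝ}
    (hf : Integrable f (((volume : Measure ℝ).restrict (Ioi 0)).prod
        ((volume : Measure (Euc d)).prod ((volume : Measure ℝ).restrict (Ioo 0 1)))))
    (h : ∀ η : ℝ, 0 < η → ∀ μ : Euc d, ∀ x ∈ Ioo (0 : ℝ) 1, f (η, μ, x) =
      C * (x ^ (ν - (d : ℝ) / 2 - 1) * q x) *
        (gaussPdf d z μ ((l * η)⁻¹) * gaussPdf d μ 0 (η⁻¹ * x⁻¹ * (1 - x)) *
        (η ^ ((l - 1) * d / 2 + ν - d / 2 - 1) * Real.exp (-(η * v) / 2)))) :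
    ∫ η in Ioi (0 : ℝ), ∫ μ, ∫ x in Ioo (0 : ℝ) 1, f (η, μ, x) =
      C * (2 * Real.pi) ^ (-(d : ℝ) / 2) * Real.Gamma ((l - 1) * d / 2 + ν) *
        (v / 2) ^ (-((l - 1) * d / 2 + ν)) * l ^ ν * Jquant d ν q l (wStat l z v) := by
  have hl0 : 0 < l := by linarith
  have hκ : 0 < (l - 1) * d / 2 + ν := by
    have : 0 ≤ (l - 1) * d / 2 := by
      have := sub_nonneg.2 hl
      positivity
    linarith
  rw [integral_rotate hf]
  have key : ∀ x ∈ Ioo (0 : ℝ) 1, ∫ η in Ioi (0 : ℝ), ∫ μ, f (η, μ, x) =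
      C * (x ^ (ν - (d : ℝ) / 2 - 1) * q x) *
      ((2 * Real.pi) ^ (-(d : ℝ) / 2) * (l * x / (l - (l - 1) * x)) ^ ((d : ℝ) / 2) *
        (Real.Gamma ((l - 1) * d / 2 + ν) *
          ((v + l * x / (l - (l - 1) * x) * ‖z‖ ^ 2) / 2) ^ (-((l - 1) * d / 2 + ν)))) := by
    intro x hx
    rw [← integral_precision_mean d z hl0 hv hκ hx, ← integral_const_mul]
    refine setIntegral_congr_fun measurableSet_Ioi fun η hη => ?_
    rw [← integral_const_mul]
    exact integral_congr_ae (.of_forall fun μ => h η hη μ x hx)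
  rw [setIntegral_congr_fun measurableSet_Ioo key, integral_mobius hl0]
  unfold Jquant
  rw [← integral_const_mul]
  refine setIntegral_congr_fun measurableSet_Ioo fun t ht => ?_
  have ht0 := ht.1
  have hD : 0 < 1 + (l - 1) * t := by
    have := mul_nonneg (sub_nonneg.2 hl) ht0.le
    linarith
  set D := 1 + (l - 1) * t with hDdef
  have hw : 0 ≤ wStat l z v := by unfold wStat; positivity
  have hW : 0 < 1 + wStat l z v * t := by positivity
  -- In the new variable the marginal precision is simply `l * t`.
  have e1 : l * (l * t / D) / (l - (l - 1) * (l * t / D)) = l * t := by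
    have : l - (l - 1) * (l * t / D) = l / D := by
      rw [hDdef] at hD ⊢; field_simp; ring
    rw [this]; field_simp
  have e2 : (v + l * t * ‖z‖ ^ 2) / 2 = v / 2 * (1 + wStat l z v * t) := by
    unfold wStat; field_simp
  rw [e1, e2, Real.mul_rpow (by positivity) hW.le, Real.div_rpow (by positivity) hD.le,
    Real.mul_rpow hl0.le ht0.le, Real.mul_rpow hl0.le ht0.le]
  have e3 : l ^ ν = l * l ^ (ν - (d : ℝ) / 2 - 1) * l ^ ((d : ℝ) / 2) := by
    nth_rewrite 2 [← Real.rpow_one l]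
    rw [← Real.rpow_add hl0, ← Real.rpow_add hl0]; congr 1; ring
  have e4 : t ^ (ν - 1) = t ^ (ν - (d : ℝ) / 2 - 1) * t ^ ((d : ℝ) / 2) := by
    rw [← Real.rpow_add ht0]; congr 1; ring
  have e5 : D ^ ((d : ℝ) / 2 - ν - 1) = (D ^ 2)⁻¹ * (D ^ (ν - (d : ℝ) / 2 - 1))⁻¹ := by
    rw [← Real.rpow_natCast D 2, ← Real.rpow_neg hD.le, ← Real.rpow_neg hD.le,
      ← Real.rpow_add hD]
    congr 1; push_cast; ring
  have e6 : -((l - 1) * (d : ℝ) / 2) - ν = -((l - 1) * d / 2 + ν) := by ring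
  rw [e3, e4, e5, e6]
  ring

/-! ### Updating by one observation -/

/-- Decomposition of the sum of squares after adding one observation `y`; the last term is the
increment `newS n xbar y s - s`. -/
lemma sq_norm_update {d : ℕ} (n : ℕ) (y xbar μ : Euc d) :
    ‖y - μ‖ ^ 2 + n * ‖xbar - μ‖ ^ 2 =
      ((n : ℝ) + 1) * ‖newMean n xbar y - μ‖ ^ 2 + n * ‖y - xbar‖ ^ 2 / ((n : ℝ) + 1) := by
  have hn : (0 : ℝ) < (n : ℝ) + 1 := by positivity
  set a := y - μ with ha
  set b := xbar - μ with hb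
  have h1 : newMean n xbar y - μ = ((n : ℝ) + 1)⁻¹ • ((n : ℝ) • b + a) := by
    unfold newMean
    have : μ = ((n : ℝ) + 1)⁻¹ • (((n : ℝ) + 1) • μ) := by
      rw [smul_smul, inv_mul_cancel₀ hn.ne', one_smul]
    nth_rewrite 1 [this]
    rw [← smul_sub, ha, hb]
    congr 1
    module
  have h2 : y - xbar = a - b := by rw [ha, hb]; abel
  clear_value a b
  rw [h1, h2, norm_smul, mul_pow, norm_add_sq_real, norm_sub_sq_real, norm_smul, inner_smul_left,
    real_inner_comm a b]
  simp only [mul_pow, Real.norm_eq_abs, sq_abs, conj_trivial]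
  field_simp
  ring

/-- The likelihood of the mean of `n` observations times that of one more observation is, up to
factors free of `μ`, the likelihood of the mean of all `n + 1`. -/
lemma gaussPdf_update {d n : ℕ} (hn : 0 < n) (y xbar μ : Euc d) {η : ℝ} (hη : 0 < η) :
    gaussPdf d y μ η⁻¹ * gaussPdf d xbar μ (((n : ℝ) * η)⁻¹) =
      ((n : ℝ) / (n + 1)) ^ ((d : ℝ) / 2) * (2 * Real.pi) ^ (-(d : ℝ) / 2) * η ^ ((d : ℝ) / 2) *
        Real.exp (-(η * (n * ‖y - xbar‖ ^ 2 / ((n : ℝ) + 1))) / 2) *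
        gaussPdf d (newMean n xbar y) μ ((((n : ℝ) + 1) * η)⁻¹) := by
  have hn' : (0 : ℝ) < n := by exact_mod_cast hn
  have hn1 : (0 : ℝ) < (n : ℝ) + 1 := by positivity
  have e : ∀ c : ℝ, 0 < c → (2 * Real.pi * c⁻¹) ^ (-(d : ℝ) / 2) =
      (2 * Real.pi) ^ (-(d : ℝ) / 2) * c ^ ((d : ℝ) / 2) := by
    intro c hc
    rw [Real.mul_rpow (by positivity) (by positivity), Real.inv_rpow hc.le, neg_div,
      Real.rpow_neg hc.le, inv_inv]
  have hexp : Real.exp (-‖y - μ‖ ^ 2 / (2 * η⁻¹)) *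
      Real.exp (-‖xbar - μ‖ ^ 2 / (2 * ((n : ℝ) * η)⁻¹)) =
      Real.exp (-(η * (n * ‖y - xbar‖ ^ 2 / ((n : ℝ) + 1))) / 2) *
        Real.exp (-‖newMean n xbar y - μ‖ ^ 2 / (2 * (((n : ℝ) + 1) * η)⁻¹)) := by
    rw [← Real.exp_add, ← Real.exp_add]
    congr 1
    have h := sq_norm_update n y xbar μ
    simp only [div_eq_mul_inv, mul_inv, inv_inv] at h ⊢
    linear_combination (-η / 2) * h
  have hne : ((n : ℝ) + 1) ^ ((d : ℝ) / 2) ≠ 0 := (Real.rpow_pos_of_pos hn1 _).ne'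
  unfold gaussPdf
  rw [mul_mul_mul_comm, hexp, e η hη, e _ (by positivity), e _ (by positivity),
    Real.mul_rpow hn'.le hη.le, Real.mul_rpow hn1.le hη.le, Real.div_rpow hn'.le hn1.le]
  field_simp

/-! ### The predictive density -/

/-- closed-form expression of the Bayesian predictive density with respect to
the Gaussian-mixture prior:
`p̂_{π_GM}(y | x̄_n, s_n) = c_B (s_{n+1}/s_n)^{-ν} (J_{n+1}/J_n) p̂_R(y | x̄_n, s_n)`. -/
theorem stmt_4 (d n : ℕ) (hd : 0 < d) (hn : 2 ≤ n)
    (ν : ℝ) (hν : 0 < ν)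
    (q : ℝ → ℝ) (hq_pos : ∀ x ∈ Ioo (0 : ℝ) 1, 0 < q x)
    (y xbar : Euc d) (s : ℝ) (hs : 0 < s)
    -- all the integrals involved are assumed finite:
    (hInt_prior : ∀ (μ : Euc d) (η : ℝ), 0 < η →
      IntegrableOn (fun l : ℝ => gaussPdf d μ 0 (η⁻¹ * l⁻¹ * (1 - l)) *
        η ^ (ν - (d : ℝ) / 2 - 1) * l ^ (ν - (d : ℝ) / 2 - 1) * q l) (Ioo 0 1))
    (hInt_num : Integrable (fun p : ℝ × Euc d × ℝ =>
        gaussPdf d y p.2.1 p.1⁻¹ * gaussPdf d xbar p.2.1 (((n : ℝ) * p.1)⁻¹) * p.1 *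
          chiSqPdf (((n : ℝ) - 1) * d) (p.1 * s) *
          (gaussPdf d p.2.1 0 (p.1⁻¹ * p.2.2⁻¹ * (1 - p.2.2)) *
            p.1 ^ (ν - (d : ℝ) / 2 - 1) * p.2.2 ^ (ν - (d : ℝ) / 2 - 1) * q p.2.2))
      (((volume : Measure ℝ).restrict (Ioi 0)).prod
        ((volume : Measure (Euc d)).prod ((volume : Measure ℝ).restrict (Ioo 0 1)))))
    (hInt_den : Integrable (fun p : ℝ × Euc d × ℝ =>
        gaussPdf d xbar p.2.1 (((n : ℝ) * p.1)⁻¹) * p.1 *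
          chiSqPdf (((n : ℝ) - 1) * d) (p.1 * s) *
          (gaussPdf d p.2.1 0 (p.1⁻¹ * p.2.2⁻¹ * (1 - p.2.2)) *
            p.1 ^ (ν - (d : ℝ) / 2 - 1) * p.2.2 ^ (ν - (d : ℝ) / 2 - 1) * q p.2.2))
      (((volume : Measure ℝ).restrict (Ioi 0)).prod
        ((volume : Measure (Euc d)).prod ((volume : Measure ℝ).restrict (Ioo 0 1)))))
    (hInt_Jn : IntegrableOn (fun t : ℝ =>
        t ^ (ν - 1) * (1 + ((n : ℝ) - 1) * t) ^ ((d : ℝ) / 2 - ν - 1) *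
          (1 + wStat (n : ℝ) xbar s * t) ^ (-(((n : ℝ) - 1) * (d : ℝ) / 2) - ν) *
          q ((n : ℝ) * t / (1 + ((n : ℝ) - 1) * t))) (Ioo 0 1))
    (hInt_Jn1 : IntegrableOn (fun t : ℝ =>
        t ^ (ν - 1) * (1 + (n : ℝ) * t) ^ ((d : ℝ) / 2 - ν - 1) *
          (1 + wStat ((n : ℝ) + 1) (newMean n xbar y) (newS n xbar y s) * t) ^
            (-((n : ℝ) * (d : ℝ) / 2) - ν) *
          q (((n : ℝ) + 1) * t / (1 + (n : ℝ) * t))) (Ioo 0 1)) :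
    bayesPred d n (gmPrior d ν q) y xbar s =
      (1 + 1 / (n : ℝ)) ^ ν * (betaFun ν (((n : ℝ) - 1) * d / 2) / betaFun ν ((n : ℝ) * d / 2)) *
        (newS n xbar y s / s) ^ (-ν) *
        (Jquant d ν q ((n : ℝ) + 1) (wStat ((n : ℝ) + 1) (newMean n xbar y) (newS n xbar y s)) /
          Jquant d ν q (n : ℝ) (wStat (n : ℝ) xbar s)) *
        bestEquiv d n y xbar s := by
  have hn0 : 0 < n := by omega
  have hn' : (0 : ℝ) < n := by exact_mod_cast hn0
  have hn1 : (1 : ℝ) ≤ n := by exact_mod_cast hn0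
  have hd' : (0 : ℝ) < d := by exact_mod_cast hd
  have hn2 : (0 : ℝ) < (n : ℝ) - 1 := by
    have : (2 : ℝ) ≤ n := by exact_mod_cast hn
    linarith
  have hs1 : 0 < newS n xbar y s := by unfold newS; positivity
  set C : ℝ := s ^ (((n : ℝ) - 1) * d / 2 - 1) /
    ((2 : ℝ) ^ (((n : ℝ) - 1) * d / 2) * Real.Gamma (((n : ℝ) - 1) * d / 2)) with hC
  have hCpos : 0 < C := by
    have := Real.Gamma_pos_of_pos (s := ((n : ℝ) - 1) * d / 2) (by positivity)
    positivity
  have hden := integral_kernel d xbar C q hn1 hs hν hInt_den (by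
    intro η hη μ x hx
    have e : η ^ (((n : ℝ) - 1) * d / 2 + ν - d / 2 - 1) =
        η * η ^ (((n : ℝ) - 1) * d / 2 - 1) * η ^ (ν - (d : ℝ) / 2 - 1) := by
      nth_rewrite 2 [← Real.rpow_one η]
      rw [← Real.rpow_add hη, ← Real.rpow_add hη]; congr 1; ring
    simp only [chiSqPdf]
    rw [e, Real.mul_rpow hη.le hs.le, hC]
    ring)
  have hnum := integral_kernel d (newMean n xbar y) (l := (n : ℝ) + 1)
    (C * (((n : ℝ) / (n + 1)) ^ ((d : ℝ) / 2) * (2 * Real.pi) ^ (-(d : ℝ) / 2))) q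
    (by linarith) hs1 hν hInt_num (by
    intro η hη μ x hx
    have e : η ^ (((n : ℝ) + 1 - 1) * d / 2 + ν - d / 2 - 1) = η ^ ((d : ℝ) / 2) *
        (η * η ^ (((n : ℝ) - 1) * d / 2 - 1) * η ^ (ν - (d : ℝ) / 2 - 1)) := by
      nth_rewrite 3 [← Real.rpow_one η]
      rw [← Real.rpow_add hη, ← Real.rpow_add hη, ← Real.rpow_add hη]; congr 1; ring
    have e2 : Real.exp (-(η * newS n xbar y s) / 2) =
        Real.exp (-(η * (n * ‖y - xbar‖ ^ 2 / ((n : ℝ) + 1))) / 2) *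
          Real.exp (-(η * s) / 2) := by
      rw [← Real.exp_add]; unfold newS; congr 1; ring
    simp only [chiSqPdf]
    rw [gaussPdf_update hn0 y xbar μ hη, e, e2, Real.mul_rpow hη.le hs.le, hC]
    ring)
  unfold bayesPred bayesPredNum bayesPredDen gmPrior
  simp_rw [← integral_const_mul]
  refine (congrArg₂ (· / ·) hnum hden).trans ?_
  rw [add_sub_cancel_right]
  unfold bestEquiv betaFun
  generalize Jquant d ν q ((n : ℝ) + 1) _ = J1
  generalize Jquant d ν q (n : ℝ) _ = J0
  have hg1 := Real.Gamma_pos_of_pos (s := ((n : ℝ) - 1) * d / 2) (by positivity)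
  have hg2 := Real.Gamma_pos_of_pos (s := (n : ℝ) * d / 2) (by positivity)
  have hg3 := Real.Gamma_pos_of_pos hν
  have hg4 := Real.Gamma_pos_of_pos (s := ((n : ℝ) - 1) * d / 2 + ν) (by positivity)
  have hg5 := Real.Gamma_pos_of_pos (s := (n : ℝ) * d / 2 + ν) (by positivity)
  have r1 : 1 + (n : ℝ) / (((n : ℝ) + 1) * s) * ‖y - xbar‖ ^ 2 = newS n xbar y s / s := by
    unfold newS; field_simp
  have r2 : (1 + 1 / (n : ℝ)) ^ ν = ((n : ℝ) + 1) ^ ν / (n : ℝ) ^ ν := by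
    rw [← Real.div_rpow (by positivity) hn'.le]; congr 1; field_simp
  generalize newS n xbar y s = S at *
  -- All powers of `2`, `π`, `s` and `S` collect into one identity.
  have hpow : (2 * Real.pi) ^ (-(d : ℝ) / 2) * (S / 2) ^ (-((n : ℝ) * d / 2 + ν)) *
      ((n : ℝ) / (n + 1)) ^ ((d : ℝ) / 2) =
      (s / 2) ^ (-(((n : ℝ) - 1) * d / 2 + ν)) * ((S / s) ^ (-ν) *
      ((n : ℝ) / (((n : ℝ) + 1) * Real.pi * s)) ^ ((d : ℝ) / 2) *
      (S / s) ^ (-((n : ℝ) * d) / 2)) := by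
    have hS2 : S / 2 = S / s * (s / 2) := by field_simp
    have hfr : (n : ℝ) / (((n : ℝ) + 1) * Real.pi * s) =
        (n : ℝ) / (n + 1) * (2 * Real.pi)⁻¹ * (s / 2)⁻¹ := by field_simp
    have hx : 0 < S / s := by positivity
    have hz : 0 < s / 2 := by positivity
    have p1 : (S / s) ^ (-((n : ℝ) * d / 2 + ν)) =
        (S / s) ^ (-ν) * (S / s) ^ (-((n : ℝ) * d) / 2) := by
      rw [← Real.rpow_add hx]; congr 1; ring
    have p2 : (s / 2) ^ (-((n : ℝ) * d / 2 + ν)) =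
        (s / 2) ^ (-(((n : ℝ) - 1) * d / 2 + ν)) * ((s / 2) ^ ((d : ℝ) / 2))⁻¹ := by
      rw [← Real.rpow_neg hz.le, ← Real.rpow_add hz]; congr 1; ring
    have hP : 0 < 2 * Real.pi := by positivity
    generalize 2 * Real.pi = P at *
    rw [hfr, hS2, Real.mul_rpow hx.le hz.le, Real.mul_rpow (by positivity) (by positivity),
      Real.mul_rpow (by positivity) (by positivity), Real.inv_rpow hz.le,
      Real.inv_rpow hP.le, neg_div, Real.rpow_neg hP.le, p1, p2]
    ring
  rw [r1, r2, add_comm ν, add_comm ν]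
  have q1 : 0 < (2 * Real.pi) ^ (-(d : ℝ) / 2) := by positivity
  have q2 : 0 < (s / 2) ^ (-(((n : ℝ) - 1) * d / 2 + ν)) := by positivity
  have q3 : 0 < (n : ℝ) ^ ν := by positivity
  rcases eq_or_ne J0 0 with rfl | hJ
  · simp
  rw [show ∀ F P G T L : ℝ, C * (F * P) * P * G * T * L * J1 = C * P * G * L * J1 * (P * T * F) by
    intros; ring, hpow]
  field_simp

end
end

section
/- Let d ≥ 1 and n ≥ 2 be integers, 0 < ν < 1, μ ∈ ℝ^d, σ² > 0, η = 1/σ², and let q(λ) = (1−λ)^{(n−1)d/2−1} (1 − (n−1)λ/n)^{−(n−2)d/2−ν} for λ ∈ (0,1). With expectations taken with respect to the joint density φ(x̄; μ, σ²/n)·[γ(s/σ²;(n−1)d)/σ²]·φ(y; μ, σ²) of (x̄_n, s_n, y), and with x̄_{n+1} = (n x̄_n + y)/(n+1), s_{n+1} = s_n + n‖y − x̄_n‖²/(n+1), w_l = l‖x̄_l‖²/s_l, u_l = w_l/(1+w_l) for l ∈ {n, n+1}, and J_l = ∫_0^1 λ^{ν−1}(1+(l−1)λ)^{d/2−ν−1}(1+w_l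 λ)^{−(l−1)d/2−ν} q(lλ/(1+(l−1)λ)) dλ, one has E[ log( [B(ν,(n−1)d/2)/B(ν,nd/2)] · (J_{n+1}/J_n) · (1−u_{n+1})^ν/(1−u_n)^ν ) ] ≥ ν · g(n,d,ν) · E(1 − u_n), provided the expectations exist. -/
/-!
Write `v_l = 1 - u_l = 1/(1 + w_l)`. The choice of `q` makes the integrand of `J_n` a weighted Beta
kernel `t^(ν-1) (1-t)^(b-1) (1+wt)^(-b-ν)`, so that `J_n = B(ν, (n-1)d/2) v_n^ν` exactly
(`Jquant_n`). The integrand of `J_{n+1}` dominates the kernel with `b = nd/2` times `(1-t)^(-c)`,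
`c = (d-ν)/n`; concavity (`d ≤ n`) or convexity (`d ≥ n+1`) of `x ↦ x^c` then gives
`log (J_{n+1} / (B(ν, nd/2) v_{n+1}^ν)) ≥ ν g v_{n+1}` (`gFun_log_bound`). Hence, pointwise, the
logarithm in the theorem is at least `ν g v_{n+1} + 2ν log (v_{n+1} / v_n)` (`log_ratio_ge`).

It remains to see that `ν g (v_{n+1} - v_n) + 2ν log (v_{n+1} / v_n)` has nonnegative expectation.
Here `u_l = ‖x̄_l‖² / Q_l` with `Q_l = s_l/l + ‖x̄_l‖²`, and `‖z‖²/Q` is jointly convex, as is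
`-log (1 - ‖z‖²/Q)`. In the variables `M = x̄_{n+1}`, `s = s_n`, `e = y - x̄_n` the joint density is
even in `e`, so the integrand may be averaged over `±e`. The tangent-plane inequality at
`(M, Q_{n+1})` then bounds the average from below by a multiple of
`-(s - (n-1) (n/(n+1)) ‖e‖²)`, the multiplier depending on `M` and `s_{n+1}` only
(`excess_symm_ge`, `minorant_le`).

The density depends on `(s, e)` through `s^((n-1)d/2-1)` and `s_{n+1} = s + (n/(n+1)) ‖e‖²`; given
`(M, s_{n+1})` the bracket has mean zero, because `s` and `(n/(n+1)) ‖e‖²` are scaled chi-squares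
with `(n-1)d` and `d` degrees of freedom. In `integral_cond_mean_zero` this is proved by the
dilation `e ↦ √s e`, which separates the variables and leaves a radial integral that is the
integral of an exact derivative.
-/

open MeasureTheory Set

noncomputable section

/-! ### A weighted Beta integral -/

lemma betaFun_pos {a b : ℝ} (ha : 0 < a) (hb : 0 < b) : 0 < betaFun a b :=
  ProbabilityTheory.beta_pos ha hb

lemma integrableOn_beta {a b : ℝ} (ha : 0 < a) (hb : 0 < b) :
    IntegrableOn (fun t : ℝ => t ^ (a - 1) * (1 - t) ^ (b - 1)) (Ioo 0 1) := by
  have h := Complex.betaIntegral_convergent (u := a) (v := b) (by simpa) (by simpa)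
  rw [intervalIntegrable_iff_integrableOn_Ioo_of_le zero_le_one] at h
  refine (h.re).congr ?_
  refine ae_restrict_of_forall_mem measurableSet_Ioo fun x hx => ?_
  have h1 : (0 : ℝ) ≤ 1 - x := by linarith [hx.2]
  beta_reduce
  norm_cast
  rw [← Complex.ofReal_cpow hx.1.le, ← Complex.ofReal_cpow h1]
  norm_cast

lemma integral_beta {a b : ℝ} (ha : 0 < a) (hb : 0 < b) :
    ∫ t in Ioo (0 : ℝ) 1, t ^ (a - 1) * (1 - t) ^ (b - 1) = betaFun a b := by
  have h := Complex.betaIntegral_convergent (u := a) (v := b) (by simpa) (by simpa)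
  rw [intervalIntegrable_iff_integrableOn_Ioo_of_le zero_le_one] at h
  change _ = ProbabilityTheory.beta a b
  rw [ProbabilityTheory.beta_eq_betaIntegralReal a b ha hb, Complex.betaIntegral,
    intervalIntegral.integral_of_le zero_le_one, integral_Ioc_eq_integral_Ioo,
    ← RCLike.re_to_complex, ← integral_re h]
  refine setIntegral_congr_fun measurableSet_Ioo fun x hx => ?_
  have h1 : (0 : ℝ) ≤ 1 - x := by linarith [hx.2]
  norm_cast
  rw [← Complex.ofReal_cpow hx.1.le, ← Complex.ofReal_cpow h1]
  norm_cast

/-- The weighted Beta kernel `t^(a-1) (1-t)^(b-1) (1+wt)^(-b-a)`. -/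
def betaKern (a b w t : ℝ) : ℝ := t ^ (a - 1) * (1 - t) ^ (b - 1) * (1 + w * t) ^ (-b - a)

/-- The substitution `t ↦ (1+w)t/(1+wt)` turns the Beta integral into that of `betaKern`. -/
lemma betaKern_aux {a b w : ℝ} (ha : 0 < a) (hb : 0 < b) (hw : 0 ≤ w) :
    IntegrableOn (betaKern a b w) (Ioo 0 1) ∧
      ∫ t in Ioo (0 : ℝ) 1, betaKern a b w t = betaFun a b * (1 + w) ^ (-a) := by
  set f : ℝ → ℝ := fun t => t * (1 + w) / (1 + w * t) with hf
  set f' : ℝ → ℝ := fun t => (1 + w) / (1 + w * t) ^ 2 with hf'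
  have hpos : ∀ t ∈ Ioo (0 : ℝ) 1, 0 < 1 + w * t := fun t ht => by
    have := mul_nonneg hw ht.1.le; linarith
  have hder : ∀ t ∈ Ioo (0 : ℝ) 1, HasDerivWithinAt f (f' t) (Ioo 0 1) t := by
    intro t ht
    have h0 := (hpos t ht).ne'
    have h1 : HasDerivAt f
        (((1 * (1 + w)) * (1 + w * t) - t * (1 + w) * (w * 1)) / (1 + w * t) ^ 2) t := by
      refine HasDerivAt.div ((hasDerivAt_id t).mul_const _) ?_ h0
      exact ((hasDerivAt_id t).const_mul w).const_add 1
    refine (h1.congr_deriv ?_).hasDerivWithinAt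
    change _ = (1 + w) / (1 + w * t) ^ 2
    ring
  have hinj : InjOn f (Ioo 0 1) := by
    intro x hx y hy hxy
    have h1 := (hpos x hx).ne'
    have h2 := (hpos y hy).ne'
    replace hxy : x * (1 + w) / (1 + w * x) = y * (1 + w) / (1 + w * y) := hxy
    rw [div_eq_div_iff h1 h2] at hxy
    have h3 : (1 + w) * (x - y) = 0 := by linear_combination hxy
    have h4 : 1 + w ≠ 0 := by linarith
    have := (mul_eq_zero.1 h3).resolve_left h4
    linarith
  have himg : Set.image f (Ioo 0 1) = Ioo 0 1 := by
    ext y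
    constructor
    · rintro ⟨t, ht, rfl⟩
      have h0 := hpos t ht
      refine ⟨by have := ht.1; simp only [hf]; positivity, ?_⟩
      simp only [hf]
      rw [div_lt_one h0]
      linarith [ht.2]
    · intro hy
      have h0 : 0 < 1 + w * (1 - y) := by
        have := mul_nonneg hw (by linarith [hy.2] : 0 ≤ 1 - y); linarith
      refine ⟨y / (1 + w * (1 - y)), ⟨div_pos hy.1 h0, ?_⟩, ?_⟩
      · rw [div_lt_one h0]
        nlinarith [hy.2]
      · simp only [hf]
        have h5 : 1 + w * (y / (1 + w * (1 - y))) = (1 + w) / (1 + w * (1 - y)) := by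
          field_simp; ring
        rw [h5]
        have : 1 + w ≠ 0 := by linarith
        field_simp
  have hpt : ∀ t ∈ Ioo (0 : ℝ) 1,
      |f' t| • ((f t) ^ (a - 1) * (1 - f t) ^ (b - 1)) = (1 + w) ^ a * betaKern a b w t := by
    intro t ht
    have h0 := hpos t ht
    have hw1 : 0 < 1 + w := by linarith
    have h1t : 0 < 1 - t := by linarith [ht.2]
    have e1 : 1 - f t = (1 - t) / (1 + w * t) := by
      simp only [hf]
      rw [eq_div_iff h0.ne', sub_mul, div_mul_cancel₀ _ h0.ne']
      ring
    have e2 : |f' t| = (1 + w) / (1 + w * t) ^ 2 := abs_of_pos (by positivity)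
    rw [e1, e2, betaKern, smul_eq_mul]
    simp only [hf]
    rw [Real.div_rpow (mul_pos ht.1 hw1).le h0.le, Real.div_rpow h1t.le h0.le,
      Real.mul_rpow ht.1.le hw1.le]
    have e3 : (1 + w) ^ a = (1 + w) ^ (a - 1) * (1 + w) := by
      rw [← Real.rpow_add_one hw1.ne']; ring_nf
    have e4 : (1 + w * t) ^ (-b - a) =
        ((1 + w * t) ^ 2)⁻¹ * ((1 + w * t) ^ (a - 1))⁻¹ * ((1 + w * t) ^ (b - 1))⁻¹ := by
      rw [← Real.rpow_natCast, ← Real.rpow_neg h0.le, ← Real.rpow_neg h0.le, ← Real.rpow_neg h0.le,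
        ← Real.rpow_add h0, ← Real.rpow_add h0]
      congr 1; push_cast; ring
    rw [e3, e4]
    ring
  have hne : (1 + w) ^ a ≠ 0 := (Real.rpow_pos_of_pos (by linarith) a).ne'
  constructor
  · have h := integrableOn_beta ha hb
    rw [← himg, integrableOn_image_iff_integrableOn_abs_deriv_smul measurableSet_Ioo hder hinj,
      integrableOn_congr_fun hpt measurableSet_Ioo] at h
    have h2 := h.const_mul ((1 + w) ^ a)⁻¹
    refine h2.congr (Filter.Eventually.of_forall fun t => ?_)
    simp only
    rw [inv_mul_cancel_left₀ hne]
  · have h := integral_beta ha hb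
    rw [← himg, integral_image_eq_integral_abs_deriv_smul measurableSet_Ioo hder hinj,
      setIntegral_congr_fun measurableSet_Ioo hpt, integral_const_mul] at h
    rw [← h, Real.rpow_neg (by linarith)]
    field_simp

lemma integrableOn_betaKern {a b w : ℝ} (ha : 0 < a) (hb : 0 < b) (hw : 0 ≤ w) :
    IntegrableOn (betaKern a b w) (Ioo 0 1) := (betaKern_aux ha hb hw).1

lemma integral_betaKern {a b w : ℝ} (ha : 0 < a) (hb : 0 < b) (hw : 0 ≤ w) :
    ∫ t in Ioo (0 : ℝ) 1, betaKern a b w t = betaFun a b * (1 + w) ^ (-a) :=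
  (betaKern_aux ha hb hw).2

/-- Multiplying the kernel by `((1+wt)/(1-t))^c` lowers its second parameter by `c`. -/
lemma betaKern_mul_rpow {a b w t : ℝ} (c : ℝ) (hw : 0 ≤ w) (ht : t ∈ Ioo (0 : ℝ) 1) :
    betaKern a b w t * ((1 + w * t) / (1 - t)) ^ c = betaKern a (b - c) w t := by
  have h0 : 0 < 1 + w * t := by have := mul_nonneg hw ht.1.le; linarith
  have h1t : 0 < 1 - t := by linarith [ht.2]
  unfold betaKern
  rw [Real.div_rpow h0.le h1t.le,
    show b - c - 1 = (b - 1) - c by ring, Real.rpow_sub h1t (b - 1) c,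
    show -(b - c) - a = (-b - a) + c by ring, Real.rpow_add h0 _ c]
  ring

lemma betaKern_nonneg {a b w t : ℝ} (hw : 0 ≤ w) (ht : t ∈ Ioo (0 : ℝ) 1) :
    0 ≤ betaKern a b w t := by
  have h0 : 0 < 1 + w * t := by have := mul_nonneg hw ht.1.le; linarith
  have h1t : 0 < 1 - t := by linarith [ht.2]
  have := ht.1
  unfold betaKern; positivity

/-! ### The quantities `J_n` and `J_{n+1}` -/

section Jbounds

variable {d n : ℕ} {ν w : ℝ}

/-- For the present `q`, the integrand of `J_n` is exactly a weighted Beta kernel. -/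
lemma Jquant_n (hd : 1 ≤ d) (hn : 2 ≤ n) (hν0 : 0 < ν) (hw : 0 ≤ w) :
    Jquant d ν (qLow d n ν) (n : ℝ) w =
      betaFun ν (((n : ℝ) - 1) * d / 2) * (1 + w) ^ (-ν) := by
  have hn' : (2 : ℝ) ≤ n := by exact_mod_cast hn
  have hd' : (1 : ℝ) ≤ d := by exact_mod_cast hd
  have hp : 0 < ((n : ℝ) - 1) * d / 2 := by
    have : 0 < (n : ℝ) - 1 := by linarith
    positivity
  rw [← integral_betaKern hν0 hp hw]
  unfold Jquant
  refine setIntegral_congr_fun measurableSet_Ioo fun t ht => ?_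
  have ht0 := ht.1
  have h1t : 0 < 1 - t := by linarith [ht.2]
  have hD : 0 < 1 + ((n : ℝ) - 1) * t := by
    have := mul_nonneg (by linarith : 0 ≤ (n : ℝ) - 1) ht0.le; linarith
  have e1 : 1 - (n : ℝ) * t / (1 + ((n : ℝ) - 1) * t) = (1 - t) / (1 + ((n : ℝ) - 1) * t) := by
    rw [eq_div_iff hD.ne', sub_mul, div_mul_cancel₀ _ hD.ne']; ring
  have e2 : 1 - ((n : ℝ) - 1) * ((n : ℝ) * t / (1 + ((n : ℝ) - 1) * t)) / n
      = (1 + ((n : ℝ) - 1) * t)⁻¹ := by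
    have : (n : ℝ) ≠ 0 := by linarith
    have h3 : ((n : ℝ) - 1) * ((n : ℝ) * t / (1 + ((n : ℝ) - 1) * t)) / n
        = ((n : ℝ) - 1) * t / (1 + ((n : ℝ) - 1) * t) := by
      rw [mul_div_assoc, div_right_comm, mul_div_cancel_left₀ _ this, mul_div_assoc]
    rw [h3, eq_comm, inv_eq_one_div, div_eq_iff hD.ne', sub_mul, div_mul_cancel₀ _ hD.ne']; ring
  simp only [qLow, betaKern]
  rw [e1, e2, Real.div_rpow h1t.le hD.le, Real.inv_rpow hD.le, ← Real.rpow_neg hD.le,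
    div_eq_mul_inv ((1 - t) ^ _), ← Real.rpow_neg hD.le]
  set D := 1 + ((n : ℝ) - 1) * t
  have e3 : D ^ ((d : ℝ) / 2 - ν - 1) * D ^ (-(((n : ℝ) - 1) * d / 2 - 1)) *
      D ^ (-(-(((n : ℝ) - 2) * d / 2) - ν)) = 1 := by
    rw [← Real.rpow_add hD, ← Real.rpow_add hD]
    convert Real.rpow_zero D using 2
    ring
  linear_combination (t ^ (ν - 1) * (1 + w * t) ^ (-(((n : ℝ) - 1) * d / 2) - ν) *
    (1 - t) ^ (((n : ℝ) - 1) * d / 2 - 1)) * e3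

lemma Jquant_succ (hn : 2 ≤ n) :
    Jquant d ν (qLow d n ν) ((n : ℝ) + 1) w =
      ∫ t in Ioo (0 : ℝ) 1, t ^ (ν - 1) * (1 - t) ^ (((n : ℝ) - 1) * d / 2 - 1) *
        ((1 + t / n) ^ (-(((n : ℝ) - 2) * d / 2 + ν)) *
          (1 + w * t) ^ (-((n : ℝ) * d / 2) - ν)) := by
  have hn' : (2 : ℝ) ≤ n := by exact_mod_cast hn
  have hn0 : (n : ℝ) ≠ 0 := by linarith
  unfold Jquant
  refine setIntegral_congr_fun measurableSet_Ioo fun t ht => ?_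
  have ht0 := ht.1
  have h1t : 0 < 1 - t := by linarith [ht.2]
  have hD : 0 < 1 + (n : ℝ) * t := by positivity
  have hC : 0 < 1 + t / n := by positivity
  have e1 : 1 - ((n : ℝ) + 1) * t / (1 + (n : ℝ) * t) = (1 - t) / (1 + (n : ℝ) * t) := by
    rw [eq_div_iff hD.ne', sub_mul, div_mul_cancel₀ _ hD.ne']; ring
  have e2 : 1 - ((n : ℝ) - 1) * (((n : ℝ) + 1) * t / (1 + (n : ℝ) * t)) / n
      = (1 + t / n) / (1 + (n : ℝ) * t) := by
    have h3 : ((n : ℝ) - 1) * (((n : ℝ) + 1) * t / (1 + (n : ℝ) * t)) / n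
        = (((n : ℝ) - 1) * ((n : ℝ) + 1) * t / n) / (1 + (n : ℝ) * t) := by
      ring
    rw [h3, eq_div_iff hD.ne', sub_mul, div_mul_cancel₀ _ hD.ne']
    field_simp; ring
  simp only [qLow, add_sub_cancel_right]
  rw [e1, e2, Real.div_rpow h1t.le hD.le, Real.div_rpow hC.le hD.le,
    div_eq_mul_inv ((1 - t) ^ _), ← Real.rpow_neg hD.le, div_eq_mul_inv ((1 + t / n) ^ _), ← Real.rpow_neg hD.le]
  set D := 1 + (n : ℝ) * t
  have e3 : D ^ ((d : ℝ) / 2 - ν - 1) * D ^ (-(((n : ℝ) - 1) * d / 2 - 1)) *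
      D ^ (-(-(((n : ℝ) - 2) * d / 2) - ν)) = 1 := by
    rw [← Real.rpow_add hD, ← Real.rpow_add hD]
    convert Real.rpow_zero D using 2
    ring
  rw [show -(((n : ℝ) - 2) * d / 2 + ν) = -(((n : ℝ) - 2) * d / 2) - ν by ring]
  linear_combination (t ^ (ν - 1) * (1 + w * t) ^ (-((n : ℝ) * d / 2) - ν) *
    (1 - t) ^ (((n : ℝ) - 1) * d / 2 - 1) * (1 + t / n) ^ (-(((n : ℝ) - 2) * d / 2) - ν)) * e3

lemma integrableOn_Jquant_succ (hd : 1 ≤ d) (hn : 2 ≤ n) (hν0 : 0 < ν) (hw : 0 ≤ w) :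
    IntegrableOn (fun t : ℝ => t ^ (ν - 1) * (1 - t) ^ (((n : ℝ) - 1) * d / 2 - 1) *
        ((1 + t / n) ^ (-(((n : ℝ) - 2) * d / 2 + ν)) *
          (1 + w * t) ^ (-((n : ℝ) * d / 2) - ν))) (Ioo 0 1) := by
  have hn' : (2 : ℝ) ≤ n := by exact_mod_cast hn
  have hd' : (1 : ℝ) ≤ d := by exact_mod_cast hd
  have hp : 0 < ((n : ℝ) - 1) * d / 2 := by
    have : 0 < (n : ℝ) - 1 := by linarith
    positivity
  have hA : 0 ≤ ((n : ℝ) - 2) * d / 2 + ν := by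
    have : 0 ≤ (n : ℝ) - 2 := by linarith
    positivity
  refine Integrable.mul_bdd (c := 1) (integrableOn_beta hν0 hp) ?_ ?_
  · exact Measurable.aestronglyMeasurable (by fun_prop)
  · refine ae_restrict_of_forall_mem measurableSet_Ioo fun t ht => ?_
    have ht0 := ht.1
    have h1 : 1 ≤ 1 + t / n := by have : 0 ≤ t / n := by positivity
                                  linarith
    have h2 : 1 ≤ 1 + w * t := by have := mul_nonneg hw ht0.le; linarith
    rw [Real.norm_of_nonneg (by positivity)]
    have h3 := Real.rpow_le_one_of_one_le_of_nonpos h1 (neg_nonpos.2 hA)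
    have h4 := Real.rpow_le_one_of_one_le_of_nonpos h2
      (show -((n : ℝ) * d / 2) - ν ≤ 0 by have : 0 ≤ (n : ℝ) * d / 2 := by positivity
                                          linarith)
    exact mul_le_one₀ h3 (by positivity) h4

/-- The elementary bound `1 + t/n ≤ (1-t)^(-1/n)` compares the integrand of `J_{n+1}` with
`betaKern ν (nd/2) w t · (1-t)^(-c)`, where `c = (d-ν)/n`. -/
lemma Jquant_succ_integrand_ge (hn : 2 ≤ n) (hν0 : 0 < ν) (hw : 0 ≤ w) {t : ℝ}
    (ht : t ∈ Ioo (0 : ℝ) 1) :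
    betaKern ν ((n : ℝ) * d / 2) w t * ((1 - t)⁻¹) ^ (((d : ℝ) - ν) / n) ≤
      t ^ (ν - 1) * (1 - t) ^ (((n : ℝ) - 1) * d / 2 - 1) *
        ((1 + t / n) ^ (-(((n : ℝ) - 2) * d / 2 + ν)) *
          (1 + w * t) ^ (-((n : ℝ) * d / 2) - ν)) := by
  have hn' : (2 : ℝ) ≤ n := by exact_mod_cast hn
  have hn0 : (n : ℝ) ≠ 0 := by linarith
  have ht0 := ht.1
  have h1t : 0 < 1 - t := by linarith [ht.2]
  have hC : 0 < 1 + t / n := by positivity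
  have hwt : 0 < 1 + w * t := by have := mul_nonneg hw ht0.le; linarith
  set A := ((n : ℝ) - 2) * d / 2 + ν with hAdef
  have hA : 0 ≤ A := by
    have : 0 ≤ (n : ℝ) - 2 := by linarith
    positivity
  have key : (1 - t) ^ (A / n) ≤ (1 + t / n) ^ (-A) := by
    have k1 : (1 - t) ^ (A / n) ≤ Real.exp (-t) ^ (A / n) :=
      Real.rpow_le_rpow h1t.le (by linarith [Real.add_one_le_exp (-t)]) (by positivity)
    have k2 : (Real.exp (t / n)) ^ (-A) ≤ (1 + t / n) ^ (-A) :=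
      Real.rpow_le_rpow_of_nonpos hC (by linarith [Real.add_one_le_exp (t / n)]) (by linarith)
    have k3 : Real.exp (-t) ^ (A / n) = (Real.exp (t / n)) ^ (-A) := by
      rw [← Real.exp_mul, ← Real.exp_mul]; congr 1; ring
    linarith
  have e : betaKern ν ((n : ℝ) * d / 2) w t * ((1 - t)⁻¹) ^ (((d : ℝ) - ν) / n) =
      t ^ (ν - 1) * (1 - t) ^ (((n : ℝ) - 1) * d / 2 - 1) *
        ((1 - t) ^ (A / n) * (1 + w * t) ^ (-((n : ℝ) * d / 2) - ν)) := by
    have e1 : (1 - t) ^ ((n : ℝ) * d / 2 - 1) * ((1 - t)⁻¹) ^ (((d : ℝ) - ν) / n) =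
        (1 - t) ^ (((n : ℝ) - 1) * d / 2 - 1) * (1 - t) ^ (A / n) := by
      rw [Real.inv_rpow h1t.le, ← Real.rpow_neg h1t.le, ← Real.rpow_add h1t, ← Real.rpow_add h1t]
      congr 1
      rw [hAdef]; field_simp; ring
    unfold betaKern
    linear_combination (t ^ (ν - 1) * (1 + w * t) ^ (-((n : ℝ) * d / 2) - ν)) * e1
  rw [e]
  gcongr

end Jbounds

/-! ### Pointwise lower bound for `log J_{n+1}` -/

lemma mul_log_le_log_interp {v R : ℝ} (hv0 : 0 ≤ v) (hv1 : v ≤ 1) (hR : 0 < R) :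
    v * Real.log R ≤ Real.log (v * R + (1 - v)) := by
  have h := strictConcaveOn_log_Ioi.concaveOn.2 (x := R) (y := 1) hR (by simp) hv0
    (sub_nonneg.2 hv1) (by ring)
  simpa using h

/-- Concavity of `x ↦ x^c` applied to the interpolation
`1/(1-t) = v (1+wt)/(1-t) + (1-v)` with `v = 1/(1+w)`. -/
lemma inv_rpow_ge_interp {c w t : ℝ} (hc0 : 0 ≤ c) (hc1 : c ≤ 1) (hw : 0 ≤ w)
    (ht : t ∈ Ioo (0 : ℝ) 1) :
    (1 + w)⁻¹ * ((1 + w * t) / (1 - t)) ^ c + (1 - (1 + w)⁻¹) ≤ ((1 - t)⁻¹) ^ c := by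
  have h1t : 0 < 1 - t := by linarith [ht.2]
  have hwt : 0 < 1 + w * t := by have := mul_nonneg hw ht.1.le; linarith
  have hw1 : 0 < 1 + w := by linarith
  have hv1 : (1 + w)⁻¹ ≤ 1 := inv_le_one_of_one_le₀ (by linarith)
  have h := (Real.concaveOn_rpow hc0 hc1).2 (x := (1 + w * t) / (1 - t)) (y := 1)
    (div_pos hwt h1t).le (by simp) (inv_pos.2 hw1).le (sub_nonneg.2 hv1) (by ring)
  simp only [smul_eq_mul, Real.one_rpow, mul_one] at h
  refine h.trans_eq ?_
  congr 1
  field_simp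
  ring

section LogBound

variable {d n : ℕ} {ν w : ℝ}

lemma betaFun_anti {a b c : ℝ} (ha : 0 < a) (hc0 : 0 ≤ c) (hbc : 0 < b - c) :
    betaFun a b ≤ betaFun a (b - c) := by
  have hb : 0 < b := by linarith
  rw [← integral_beta ha hb, ← integral_beta ha hbc]
  refine setIntegral_mono_on (integrableOn_beta ha hb) (integrableOn_beta ha hbc)
    measurableSet_Ioo fun t ht => ?_
  have ht0 := ht.1
  have h1t : 0 < 1 - t := by linarith [ht.2]
  exact mul_le_mul_of_nonneg_left
    (Real.rpow_le_rpow_of_exponent_ge h1t (by linarith) (by linarith)) (by positivity)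

lemma betaFun_sub_one {a b : ℝ} (ha : 0 < a) (hb : 1 < b) :
    betaFun a (b - 1) = betaFun a b * (1 + a / (b - 1)) := by
  have h1 : 0 < b - 1 := by linarith
  have h2 : Real.Gamma b = (b - 1) * Real.Gamma (b - 1) := by
    rw [← Real.Gamma_add_one h1.ne']; ring_nf
  have h3 : Real.Gamma (a + b) = (a + (b - 1)) * Real.Gamma (a + (b - 1)) := by
    rw [← Real.Gamma_add_one (by linarith)]; ring_nf
  have h4 : Real.Gamma (a + (b - 1)) ≠ 0 := (Real.Gamma_pos_of_pos (by linarith)).ne'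
  have h5 : a + (b - 1) ≠ 0 := by linarith
  have h6 : b - 1 ≠ 0 := h1.ne'
  unfold betaFun
  rw [h2, h3]
  field_simp
  ring

/-- Any integrable pointwise minorant of `betaKern · (1-t)^(-c)` bounds `J_{n+1}` from below. -/
lemma le_Jquant_succ (hd : 1 ≤ d) (hn : 2 ≤ n) (hν0 : 0 < ν) (hw : 0 ≤ w) {f : ℝ → ℝ}
    (hf : IntegrableOn f (Ioo 0 1))
    (hle : ∀ t ∈ Ioo (0 : ℝ) 1,
      f t ≤ betaKern ν ((n : ℝ) * d / 2) w t * ((1 - t)⁻¹) ^ (((d : ℝ) - ν) / n)) :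
    ∫ t in Ioo (0 : ℝ) 1, f t ≤ Jquant d ν (qLow d n ν) ((n : ℝ) + 1) w := by
  rw [Jquant_succ hn]
  exact setIntegral_mono_on hf (integrableOn_Jquant_succ hd hn hν0 hw) measurableSet_Ioo
    fun t ht => (hle t ht).trans (Jquant_succ_integrand_ge hn hν0 hw ht)

/-- The bound `log (J_{n+1} / (B(ν, nd/2) v^ν)) ≥ ν g v` with `v = 1/(1+w)`. With `c = (d-ν)/n`, the
two cases of `g` correspond to `x ↦ x^c` being concave (`d ≤ n`, interpolation between `1` and
`(1+wt)/(1-t)`) or convex (`d ≥ n+1`, tangent line at the mean `m` of `1/(1-t)`). -/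
lemma gFun_log_bound (hd : 1 ≤ d) (hn : 2 ≤ n) (hν0 : 0 < ν) (hν1 : ν < 1) (hw : 0 ≤ w) :
    0 ≤ ν * gFun n d ν ∧ 0 < Jquant d ν (qLow d n ν) ((n : ℝ) + 1) w ∧
      ν * gFun n d ν * (1 + w)⁻¹ ≤
        Real.log (Jquant d ν (qLow d n ν) ((n : ℝ) + 1) w /
          (betaFun ν ((n : ℝ) * d / 2) * (1 + w) ^ (-ν))) := by
  have hn' : (2 : ℝ) ≤ n := by exact_mod_cast hn
  have hd' : (1 : ℝ) ≤ d := by exact_mod_cast hd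
  have hn0 : (0 : ℝ) < n := by linarith
  have hb : 1 ≤ (n : ℝ) * d / 2 := by nlinarith
  set b := (n : ℝ) * d / 2 with hbdef
  set c := ((d : ℝ) - ν) / n with hcdef
  set v := (1 + w)⁻¹ with hvdef
  have hw1 : 0 < 1 + w := by linarith
  have hv0 : 0 < v := inv_pos.2 hw1
  have hv1 : v ≤ 1 := inv_le_one_of_one_le₀ (by linarith)
  have hc0 : 0 < c := div_pos (by linarith) hn0
  have hb0 : 0 < b := by linarith
  have hB := betaFun_pos hν0 hb0
  have hP : 0 < (1 + w) ^ (-ν) := Real.rpow_pos_of_pos hw1 _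
  set J := Jquant d ν (qLow d n ν) ((n : ℝ) + 1) w with hJ
  -- a multiplicative lower bound for `J_{n+1}` suffices
  suffices h : ∃ M : ℝ, 0 < M ∧ betaFun ν b * (1 + w) ^ (-ν) * M ≤ J ∧
      0 ≤ ν * gFun n d ν ∧ ν * gFun n d ν * v ≤ Real.log M by
    obtain ⟨M, hM, h1, h2, h3⟩ := h
    have hBP := mul_pos hB hP
    have hJ0 : 0 < J := lt_of_lt_of_le (mul_pos hBP hM) h1
    refine ⟨h2, hJ0, h3.trans (Real.log_le_log hM ?_)⟩
    rw [le_div_iff₀ hBP]; linarith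
  by_cases hdn : d ≤ n
  · have hdn' : (d : ℝ) ≤ n := by exact_mod_cast hdn
    have hc1 : c < 1 := by rw [hcdef, div_lt_one hn0]; linarith
    have hbc : 0 < b - c := by linarith
    have hR := betaFun_pos hν0 hbc
    have hg : ν * gFun n d ν = Real.log (betaFun ν (b - c) / betaFun ν b) := by
      rw [gFun, if_pos hdn, ← mul_assoc, mul_one_div_cancel hν0.ne', one_mul]
    rw [hg]
    have hR1 : 1 ≤ betaFun ν (b - c) / betaFun ν b := by
      rw [one_le_div hB]; exact betaFun_anti hν0 hc0.le hbc
    refine ⟨v * (betaFun ν (b - c) / betaFun ν b) + (1 - v), ?_, ?_, Real.log_nonneg hR1, ?_⟩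
    · have := mul_pos hv0 (div_pos hR hB)
      linarith
    · have hi1 := (integrableOn_betaKern hν0 hbc hw).const_mul v
      have hi2 := (integrableOn_betaKern hν0 hb0 hw).const_mul (1 - v)
      have h := le_Jquant_succ (d := d) (n := n) hd hn hν0 hw (hi1.add hi2) (by
        intro t ht
        have h1 := mul_le_mul_of_nonneg_left (inv_rpow_ge_interp hc0.le hc1.le hw ht)
          (betaKern_nonneg (a := ν) (b := b) hw ht)
        have h2 := betaKern_mul_rpow (a := ν) (b := b) c hw ht
        refine le_trans (le_of_eq ?_) h1
        simp only [Pi.add_apply]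
        rw [← h2]; ring)
      simp only [Pi.add_apply] at h
      rw [integral_add hi1 hi2, integral_const_mul, integral_const_mul,
        integral_betaKern hν0 hbc hw, integral_betaKern hν0 hb0 hw] at h
      refine le_trans (le_of_eq ?_) h
      field_simp
    · rw [mul_comm]
      exact mul_log_le_log_interp hv0.le hv1 (by linarith)
  · have hdn1 : (n : ℝ) + 1 ≤ d := by
      have : n + 1 ≤ d := by omega
      exact_mod_cast this
    have hc1 : 1 ≤ c := by rw [hcdef, one_le_div hn0]; linarith
    have hb2 : 2 ≤ b := by rw [hbdef]; nlinarith
    have hbm : 0 < b - 1 := by linarith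
    have hg : ν * gFun n d ν = c * ((b - 1)⁻¹ * Real.log (1 + ν)) := by
      rw [gFun, if_neg hdn, ← hbdef, hcdef]
      field_simp
    have hl : 0 ≤ Real.log (1 + ν) := Real.log_nonneg (by linarith)
    rw [hg]
    set m := 1 + v * (ν / (b - 1)) with hm
    have hm1 : 1 ≤ m := by
      have : 0 ≤ v * (ν / (b - 1)) := by positivity
      linarith
    have hm0 : 0 < m := by linarith
    refine ⟨m ^ c, by positivity, ?_, by positivity, ?_⟩
    · have hi1 := (integrableOn_betaKern (w := w) hν0 hbm hw).const_mul (m ^ c * (c / m * v))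
      have hi2 := (integrableOn_betaKern (w := w) hν0 hb0 hw).const_mul
        (m ^ c * (1 - c + c / m * (1 - v)))
      have h := le_Jquant_succ (d := d) (n := n) hd hn hν0 hw (hi1.add hi2) (by
        intro t ht
        have h1t : 0 < 1 - t := by linarith [ht.2]
        have hx : (1 - t)⁻¹ = v * ((1 + w * t) / (1 - t)) + (1 - v) := by
          rw [hvdef]; field_simp; ring
        -- Bernoulli's inequality: the tangent line of `x ↦ x^c` at `m`
        have hbern : m ^ c * (1 + c * ((1 - t)⁻¹ / m - 1)) ≤ ((1 - t)⁻¹) ^ c := by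
          have h0 : 0 ≤ (1 - t)⁻¹ / m := by positivity
          have h1 := one_add_mul_self_le_rpow_one_add
            (show -1 ≤ (1 - t)⁻¹ / m - 1 by linarith) hc1
          rw [add_sub_cancel, Real.div_rpow (by positivity) hm0.le, le_div_iff₀ (by positivity)]
            at h1
          linarith
        have h1 := mul_le_mul_of_nonneg_left hbern (betaKern_nonneg (a := ν) (b := b) hw ht)
        have h2 := betaKern_mul_rpow (a := ν) (b := b) 1 hw ht
        rw [Real.rpow_one] at h2
        refine le_trans (le_of_eq ?_) h1
        simp only [Pi.add_apply]
        rw [← h2, hx]; ring)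
      simp only [Pi.add_apply] at h
      rw [integral_add hi1 hi2, integral_const_mul, integral_const_mul,
        integral_betaKern hν0 hbm hw, integral_betaKern hν0 hb0 hw,
        betaFun_sub_one hν0 (by linarith)] at h
      refine le_trans (le_of_eq ?_) h
      have hmm : c / m * v * (1 + ν / (b - 1)) + (1 - c + c / m * (1 - v)) = 1 := by
        have : c / m * v * (1 + ν / (b - 1)) + (1 - c + c / m * (1 - v)) = c / m * m + (1 - c) := by
          rw [hm]; ring
        rw [this, div_mul_cancel₀ _ hm0.ne']; ring
      linear_combination (-(betaFun ν b * (1 + w) ^ (-ν) * m ^ c)) * hmm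
    · rw [Real.log_rpow hm0]
      have hk1 : v * Real.log (1 + ν / (b - 1)) ≤ Real.log m := by
        have := mul_log_le_log_interp hv0.le hv1 (show 0 < 1 + ν / (b - 1) by positivity)
        rwa [show v * (1 + ν / (b - 1)) + (1 - v) = m by rw [hm]; ring] at this
      have hk2 : (b - 1)⁻¹ * Real.log (1 + ν) ≤ Real.log (1 + ν / (b - 1)) := by
        have := mul_log_le_log_interp (inv_pos.2 hbm).le
          (inv_le_one_of_one_le₀ (by linarith : 1 ≤ b - 1)) (show 0 < 1 + ν by linarith)
        rwa [show (b - 1)⁻¹ * (1 + ν) + (1 - (b - 1)⁻¹) = 1 + ν / (b - 1) by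
          rw [div_eq_mul_inv]; ring] at this
      calc c * ((b - 1)⁻¹ * Real.log (1 + ν)) * v
          = c * (v * ((b - 1)⁻¹ * Real.log (1 + ν))) := by ring
        _ ≤ c * (v * Real.log (1 + ν / (b - 1))) := by gcongr
        _ ≤ c * Real.log m := by gcongr

end LogBound

/-! ### Vanishing of the conditional mean -/

/-- Dilating the second variable by `√s` preserves integrability and the integral, up to the
Jacobian factor. -/
lemma integral_dilate {d : ℕ} {G : ℝ × Euc d → ℝ} (hG : Measurable G)
    (hint : Integrable G (((volume : Measure ℝ).restrict (Ioi 0)).prod volume)) :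
    Integrable (fun p : ℝ × Euc d => (√p.1) ^ d * G (p.1, √p.1 • p.2))
        (((volume : Measure ℝ).restrict (Ioi 0)).prod volume) ∧
      ∫ p, (√p.1) ^ d * G (p.1, √p.1 • p.2) ∂(((volume : Measure ℝ).restrict (Ioi 0)).prod volume)
        = ∫ p, G p ∂(((volume : Measure ℝ).restrict (Ioi 0)).prod volume) := by
  have hfr : Module.finrank ℝ (Euc d) = d := by simp
  have hcov : ∀ s ∈ Ioi (0 : ℝ), ∀ f : Euc d → ℝ,
      ∫ e, (√s) ^ d * f (√s • e) = ∫ e, f e := by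
    intro s hs f
    have h0 : (0 : ℝ) < √s := Real.sqrt_pos.2 hs
    rw [integral_const_mul, Measure.integral_comp_smul_of_nonneg _ _ _ (hR := h0.le), hfr,
      smul_eq_mul, ← mul_assoc, mul_inv_cancel₀ (by positivity), one_mul]
  have hmeas : Measurable (fun p : ℝ × Euc d => (√p.1) ^ d * G (p.1, √p.1 • p.2)) := by
    fun_prop
  have hae : ∀ᵐ s ∂((volume : Measure ℝ).restrict (Ioi 0)), s ∈ Ioi (0 : ℝ) :=
    ae_restrict_mem measurableSet_Ioi
  have hI : Integrable (fun p : ℝ × Euc d => (√p.1) ^ d * G (p.1, √p.1 • p.2))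
        (((volume : Measure ℝ).restrict (Ioi 0)).prod volume) := by
    rw [integrable_prod_iff hmeas.aestronglyMeasurable]
    rw [integrable_prod_iff hG.aestronglyMeasurable] at hint
    constructor
    · filter_upwards [hint.1, hae] with s hs hs0
      exact (hs.comp_smul (Real.sqrt_pos.2 hs0).ne').const_mul _
    · refine hint.2.congr ?_
      filter_upwards [hae] with s hs0
      rw [← hcov s hs0 (fun e => ‖G (s, e)‖)]
      refine integral_congr_ae (Filter.Eventually.of_forall fun e => ?_)
      simp only [norm_mul, norm_pow, Real.norm_of_nonneg (Real.sqrt_nonneg s)]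
  refine ⟨hI, ?_⟩
  rw [integral_prod _ hI, integral_prod _ hint]
  refine integral_congr_ae ?_
  filter_upwards [hae] with s hs0
  exact hcov s hs0 (fun e => G (s, e))

/-- In polar coordinates the integrand is the derivative of `r^d (1+cr²)^(-nd/2) / d`. -/
lemma integral_radial_zero {d n : ℕ} (hd : 1 ≤ d) (hn : 2 ≤ n) {c : ℝ} (hc : 0 < c) :
    ∫ e : Euc d, (1 - ((n : ℝ) - 1) * c * ‖e‖ ^ 2) *
      (1 + c * ‖e‖ ^ 2) ^ (-((n : ℝ) * d / 2) - 1) = 0 := by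
  have hn' : (2 : ℝ) ≤ n := by exact_mod_cast hn
  have hd' : (1 : ℝ) ≤ d := by exact_mod_cast hd
  have : NeZero d := ⟨by omega⟩
  have hfr : Module.finrank ℝ (Euc d) = d := by simp
  have hnt : Nontrivial (Euc d) := Module.nontrivial_of_finrank_pos (R := ℝ) (by rw [hfr]; omega)
  rw [integral_fun_norm_addHaar (volume : Measure (Euc d))
    (fun r : ℝ => (1 - ((n : ℝ) - 1) * c * r ^ 2) * (1 + c * r ^ 2) ^ (-((n : ℝ) * d / 2) - 1)), hfr]
  suffices h : ∫ y in Ioi (0 : ℝ), y ^ (d - 1) •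
      ((1 - ((n : ℝ) - 1) * c * y ^ 2) * (1 + c * y ^ 2) ^ (-((n : ℝ) * d / 2) - 1)) = 0 by
    rw [h]; simp
  by_cases hint : IntegrableOn (fun y : ℝ => y ^ (d - 1) •
      ((1 - ((n : ℝ) - 1) * c * y ^ 2) * (1 + c * y ^ 2) ^ (-((n : ℝ) * d / 2) - 1))) (Ioi 0)
  swap
  · exact integral_undef hint
  have hder : ∀ y ∈ Ici (0 : ℝ), HasDerivAt
      (fun y : ℝ => (d : ℝ)⁻¹ * (y ^ d * (1 + c * y ^ 2) ^ (-((n : ℝ) * d / 2))))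
      (y ^ (d - 1) •
        ((1 - ((n : ℝ) - 1) * c * y ^ 2) * (1 + c * y ^ 2) ^ (-((n : ℝ) * d / 2) - 1))) y := by
    intro y hy
    have hq : 0 < 1 + c * y ^ 2 := by positivity
    have h1 : HasDerivAt (fun y : ℝ => 1 + c * y ^ 2) (c * (2 * y)) y := by
      have := ((hasDerivAt_pow 2 y).const_mul c).const_add 1
      simpa using this
    have h2 := h1.rpow_const (p := -((n : ℝ) * d / 2)) (Or.inl hq.ne')
    have h3 := ((hasDerivAt_pow d y).mul h2).const_mul (d : ℝ)⁻¹
    refine h3.congr_deriv ?_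
    have e1 : (1 + c * y ^ 2) ^ (-((n : ℝ) * d / 2)) =
        (1 + c * y ^ 2) ^ (-((n : ℝ) * d / 2) - 1) * (1 + c * y ^ 2) := by
      rw [← Real.rpow_add_one hq.ne']; ring_nf
    have e2 : y ^ d = y ^ (d - 1) * y := by
      rw [← pow_succ]; congr 1; omega
    rw [e1, e2, smul_eq_mul]
    have : (d : ℝ) ≠ 0 := by linarith
    field_simp
    ring
  have hlim : Filter.Tendsto
      (fun y : ℝ => (d : ℝ)⁻¹ * (y ^ d * (1 + c * y ^ 2) ^ (-((n : ℝ) * d / 2))))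
      Filter.atTop (nhds 0) := by
    have hk : 0 < ((n : ℝ) - 1) * d := by
      have : 0 < (n : ℝ) - 1 := by linarith
      positivity
    have h1 : Filter.Tendsto (fun y : ℝ => (d : ℝ)⁻¹ * (c ^ (-((n : ℝ) * d / 2)) *
        y ^ (-(((n : ℝ) - 1) * d)))) Filter.atTop (nhds 0) := by
      have := ((tendsto_rpow_neg_atTop hk).const_mul (c ^ (-((n : ℝ) * d / 2)))).const_mul (d : ℝ)⁻¹
      simpa using this
    refine tendsto_of_tendsto_of_tendsto_of_le_of_le' tendsto_const_nhds h1 ?_ ?_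
    · filter_upwards [Filter.eventually_gt_atTop 0] with y hy
      positivity
    · filter_upwards [Filter.eventually_gt_atTop 0] with y hy
      have h2 : (1 + c * y ^ 2) ^ (-((n : ℝ) * d / 2)) ≤ (c * y ^ 2) ^ (-((n : ℝ) * d / 2)) :=
        Real.rpow_le_rpow_of_nonpos (by positivity) (by linarith)
          (neg_nonpos.2 (by positivity))
      have h3 : y ^ d * (c * y ^ 2) ^ (-((n : ℝ) * d / 2)) = c ^ (-((n : ℝ) * d / 2)) *
          y ^ (-(((n : ℝ) - 1) * d)) := by
        rw [Real.mul_rpow hc.le (by positivity), ← Real.rpow_natCast y 2, ← Real.rpow_mul hy.le,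
          ← Real.rpow_natCast y d, mul_left_comm, ← Real.rpow_add hy]
        congr 2; push_cast; ring
      rw [← h3]
      gcongr
  rw [integral_Ioi_of_hasDerivAt_of_tendsto' hder hint hlim]
  simp [show d ≠ 0 by omega]

/-- If `s` has density proportional to `s^((n-1)d/2-1)` and `e ∈ ℝ^d` is weighted through
`s + c‖e‖²` only, then `s - (n-1)c‖e‖²` has vanishing conditional mean given `s + c‖e‖²`.
In the non-integrable case the Bochner integral is zero by convention, so no integrability of `F`
is required. -/
lemma integral_cond_mean_zero {d n : ℕ} (hd : 1 ≤ d) (hn : 2 ≤ n) {c : ℝ} (hc : 0 < c)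
    {F : ℝ → ℝ} (hF : Measurable F) :
    ∫ p : ℝ × Euc d, p.1 ^ (((n : ℝ) - 1) * d / 2 - 1) *
      ((p.1 - ((n : ℝ) - 1) * c * ‖p.2‖ ^ 2) * F (p.1 + c * ‖p.2‖ ^ 2))
      ∂(((volume : Measure ℝ).restrict (Ioi 0)).prod volume) = 0 := by
  by_cases hint : Integrable (fun p : ℝ × Euc d => p.1 ^ (((n : ℝ) - 1) * d / 2 - 1) *
      ((p.1 - ((n : ℝ) - 1) * c * ‖p.2‖ ^ 2) * F (p.1 + c * ‖p.2‖ ^ 2)))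
      (((volume : Measure ℝ).restrict (Ioi 0)).prod volume)
  swap
  · exact integral_undef hint
  obtain ⟨h1, h2⟩ := integral_dilate (by fun_prop) hint
  rw [← h2, integral_prod_symm _ h1]
  set κ := ∫ x in Ioi (0 : ℝ), x ^ ((n : ℝ) * d / 2) * F x with hκ
  have hinner : ∀ e : Euc d, (∫ s in Ioi (0 : ℝ), (√s) ^ d *
      (s ^ (((n : ℝ) - 1) * d / 2 - 1) * ((s - ((n : ℝ) - 1) * c * ‖√s • e‖ ^ 2) *
        F (s + c * ‖√s • e‖ ^ 2)))) =
      κ * ((1 - ((n : ℝ) - 1) * c * ‖e‖ ^ 2) *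
        (1 + c * ‖e‖ ^ 2) ^ (-((n : ℝ) * d / 2) - 1)) := by
    intro e
    have ha : 0 < 1 + c * ‖e‖ ^ 2 := by positivity
    set a := 1 + c * ‖e‖ ^ 2 with hadef
    have h3 : ∀ s ∈ Ioi (0 : ℝ), (√s) ^ d *
        (s ^ (((n : ℝ) - 1) * d / 2 - 1) * ((s - ((n : ℝ) - 1) * c * ‖√s • e‖ ^ 2) *
          F (s + c * ‖√s • e‖ ^ 2))) =
        ((1 - ((n : ℝ) - 1) * c * ‖e‖ ^ 2) * a ^ (-((n : ℝ) * d / 2))) *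
          ((s * a) ^ ((n : ℝ) * d / 2) * F (s * a)) := by
      intro s hs
      have hs0 : (0 : ℝ) < s := hs
      have e1 : ‖√s • e‖ ^ 2 = s * ‖e‖ ^ 2 := by
        rw [norm_smul, mul_pow, Real.norm_of_nonneg (Real.sqrt_nonneg s), Real.sq_sqrt hs0.le]
      have e2 : (√s) ^ d = s ^ ((d : ℝ) / 2) := by
        rw [Real.sqrt_eq_rpow, ← Real.rpow_natCast, ← Real.rpow_mul hs0.le]
        congr 1; ring
      have e3 : s + c * (s * ‖e‖ ^ 2) = s * a := by rw [hadef]; ring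
      have e4 : s ^ ((d : ℝ) / 2) * s ^ (((n : ℝ) - 1) * d / 2 - 1) * s = s ^ ((n : ℝ) * d / 2) := by
        rw [← Real.rpow_add hs0, ← Real.rpow_add_one hs0.ne']
        congr 1; ring
      have e5 : a ^ (-((n : ℝ) * d / 2)) * a ^ ((n : ℝ) * d / 2) = 1 := by
        rw [← Real.rpow_add ha]; simp
      rw [e1, e2, e3, Real.mul_rpow hs0.le ha.le, ← e4]
      linear_combination (-(s ^ ((d : ℝ) / 2) * s ^ (((n : ℝ) - 1) * d / 2 - 1) * s *
        (1 - ((n : ℝ) - 1) * c * ‖e‖ ^ 2) * F (s * a))) * e5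
    rw [setIntegral_congr_fun measurableSet_Ioi h3, integral_const_mul,
      integral_comp_mul_right_Ioi (fun x => x ^ ((n : ℝ) * d / 2) * F x) 0 ha, zero_mul, ← hκ,
      smul_eq_mul, Real.rpow_sub_one ha.ne']
    field_simp
  simp_rw [hinner]
  rw [integral_const_mul, integral_radial_zero hd hn hc, mul_zero]

/-! ### The pointwise inequality -/

lemma wStat_nonneg {d : ℕ} {l v : ℝ} (hl : 0 ≤ l) (z : Euc d) (hv : 0 < v) :
    0 ≤ wStat l z v := by
  unfold wStat; positivity

lemma one_sub_uStat {d : ℕ} {l v : ℝ} (hl : 0 ≤ l) (z : Euc d) (hv : 0 < v) :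
    1 - uStat l z v = (1 + wStat l z v)⁻¹ := by
  have h := wStat_nonneg hl z hv
  unfold uStat
  have : 1 + wStat l z v ≠ 0 := by linarith
  field_simp
  ring

/-- The log-ratio of the theorem is at least `νg v₁ + 2ν log(v₁/v₀)` with `v = 1 - u`: the factor
`J_n` contributes one power `v₀^(-ν)`, and `J_{n+1}` one power `v₁^ν`, besides the explicit ones. -/
lemma log_ratio_ge {d n : ℕ} {ν : ℝ} (hd : 1 ≤ d) (hn : 2 ≤ n) (hν0 : 0 < ν) (hν1 : ν < 1)
    {w₀ w₁ : ℝ} (hw₀ : 0 ≤ w₀) (hw₁ : 0 ≤ w₁) :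
    ν * gFun n d ν * (1 + w₁)⁻¹ + 2 * ν * Real.log ((1 + w₁)⁻¹ / (1 + w₀)⁻¹) ≤
      Real.log (betaFun ν (((n : ℝ) - 1) * d / 2) / betaFun ν ((n : ℝ) * d / 2) *
        (Jquant d ν (qLow d n ν) ((n : ℝ) + 1) w₁ / Jquant d ν (qLow d n ν) (n : ℝ) w₀) *
        (((1 + w₁)⁻¹) ^ ν / ((1 + w₀)⁻¹) ^ ν)) := by
  have hn' : (2 : ℝ) ≤ n := by exact_mod_cast hn
  have hd' : (1 : ℝ) ≤ d := by exact_mod_cast hd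
  have hp : 0 < ((n : ℝ) - 1) * d / 2 := by
    have : 0 < (n : ℝ) - 1 := by linarith
    positivity
  have hb : 0 < (n : ℝ) * d / 2 := by positivity
  obtain ⟨-, hJ, hlog⟩ := gFun_log_bound hd hn hν0 hν1 hw₁
  rw [Jquant_n hd hn hν0 hw₀]
  set J := Jquant d ν (qLow d n ν) ((n : ℝ) + 1) w₁
  have hB1 := betaFun_pos hν0 hp
  have hB2 := betaFun_pos hν0 hb
  have h1 : 0 < 1 + w₁ := by linarith
  have h0 : 0 < 1 + w₀ := by linarith
  rw [Real.rpow_neg h1.le, ← Real.inv_rpow h1.le] at hlog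
  rw [Real.rpow_neg h0.le, ← Real.inv_rpow h0.le]
  have hv1 : 0 < (1 + w₁)⁻¹ := inv_pos.2 h1
  have hv0 : 0 < (1 + w₀)⁻¹ := inv_pos.2 h0
  set v₁ := (1 + w₁)⁻¹
  set v₀ := (1 + w₀)⁻¹
  have hq1 := Real.rpow_pos_of_pos hv1 ν
  have hq0 := Real.rpow_pos_of_pos hv0 ν
  have e : betaFun ν (((n : ℝ) - 1) * d / 2) / betaFun ν ((n : ℝ) * d / 2) *
        (J / (betaFun ν (((n : ℝ) - 1) * d / 2) * v₀ ^ ν)) * (v₁ ^ ν / v₀ ^ ν) =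
      J / (betaFun ν ((n : ℝ) * d / 2) * v₁ ^ ν) * ((v₁ / v₀) ^ ν) ^ 2 := by
    rw [Real.div_rpow hv1.le hv0.le]
    field_simp
  have hr : 0 < v₁ / v₀ := div_pos hv1 hv0
  rw [e, Real.log_mul (by positivity) (by positivity), Real.log_pow, Real.log_rpow hr]
  push_cast
  linarith

/-- The tangent-plane inequality of the jointly convex function `‖z‖²/q`. -/
lemma tangent_sq_div {d : ℕ} (M x : Euc d) {q₀ q₁ : ℝ} (h0 : 0 < q₀) (h1 : 0 < q₁) :
    2 * inner ℝ M x / q₁ - ‖M‖ ^ 2 * q₀ / q₁ ^ 2 ≤ ‖x‖ ^ 2 / q₀ := by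
  have h := sq_nonneg ‖q₁ • x - q₀ • M‖
  rw [@norm_sub_sq_real, norm_smul, norm_smul, inner_smul_left, inner_smul_right,
    Real.norm_of_nonneg h0.le, Real.norm_of_nonneg h1.le, real_inner_comm] at h
  simp only [conj_trivial] at h
  have e : ‖x‖ ^ 2 / q₀ - (2 * inner ℝ M x / q₁ - ‖M‖ ^ 2 * q₀ / q₁ ^ 2) =
      ((q₁ * ‖x‖) ^ 2 - 2 * (q₁ * (q₀ * inner ℝ M x)) + (q₀ * ‖M‖) ^ 2) / (q₀ * q₁ ^ 2) := by
    field_simp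
    ring
  have : 0 ≤ ‖x‖ ^ 2 / q₀ - (2 * inner ℝ M x / q₁ - ‖M‖ ^ 2 * q₀ / q₁ ^ 2) := by
    rw [e]; positivity
  linarith

/-- The weight, a function of `‖x̄_{n+1}‖² = m` and `s_{n+1} = x` only, that multiplies
`s_n - (n-1)c‖y - x̄_n‖²`, `c = n/(n+1)`, in the symmetrised lower bound. -/
def tangentWeight (K ν : ℝ) (n : ℕ) (m x : ℝ) : ℝ :=
  (K + 2 * ν * (((n : ℝ) + 1) * (x / ((n : ℝ) + 1) + m) / x)) *
    (m / (x / ((n : ℝ) + 1) + m) ^ 2) / ((n : ℝ) * ((n : ℝ) + 1))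

lemma tangentWeight_mul_le {K ν : ℝ} {n : ℕ} (hn : 2 ≤ n) (hK : 0 ≤ K) (hν : 0 ≤ ν) {m x : ℝ}
    (hm : 0 ≤ m) (hx : 0 < x) :
    0 ≤ tangentWeight K ν n m x ∧ tangentWeight K ν n m x * x ≤ K + 2 * ν := by
  have hn' : (2 : ℝ) ≤ n := by exact_mod_cast hn
  have hn1 : (0 : ℝ) < (n : ℝ) + 1 := by linarith
  have hq : 0 < x / ((n : ℝ) + 1) + m := by positivity
  refine ⟨by unfold tangentWeight; positivity, ?_⟩
  set q := x / ((n : ℝ) + 1) + m with hqdef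
  have hxq : x ≤ ((n : ℝ) + 1) * q := by
    rw [hqdef, mul_add, mul_div_cancel₀ _ hn1.ne']
    have := mul_nonneg hn1.le hm; linarith
  have hmq : m / q ≤ 1 := by
    rw [div_le_one hq, hqdef]
    have : 0 ≤ x / ((n : ℝ) + 1) := by positivity
    linarith
  have e : tangentWeight K ν n m x * x =
      (K * (x / (((n : ℝ) + 1) * q)) + 2 * ν) * (m / q) / n := by
    rw [tangentWeight, ← hqdef]; field_simp
  rw [e, div_le_iff₀ (by linarith)]
  have h1 : K * (x / (((n : ℝ) + 1) * q)) + 2 * ν ≤ K + 2 * ν := by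
    have : x / (((n : ℝ) + 1) * q) ≤ 1 := by rw [div_le_one (by positivity)]; exact hxq
    nlinarith
  have h2 : 0 ≤ m / q := by positivity
  have h3 : 0 ≤ K + 2 * ν := by positivity
  calc (K * (x / (((n : ℝ) + 1) * q)) + 2 * ν) * (m / q) ≤ (K + 2 * ν) * 1 := by
        gcongr
    _ ≤ (K + 2 * ν) * n := by gcongr; linarith

/-- For one sign of `e`: convexity of `-log(1 - ‖z‖²/q)` bounds the excess by a tangent term. -/
lemma excess_ge {d n : ℕ} {K ν : ℝ} (hn : 2 ≤ n) (hK : 0 ≤ K) (hν : 0 ≤ ν)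
    (M x : Euc d) {s s₁ : ℝ} (hs : 0 < s) (hs₁ : 0 < s₁) :
    (K + 2 * ν * (((n : ℝ) + 1) * (s₁ / ((n : ℝ) + 1) + ‖M‖ ^ 2) / s₁)) *
      (2 * inner ℝ M x / (s₁ / ((n : ℝ) + 1) + ‖M‖ ^ 2) -
        ‖M‖ ^ 2 * (s / n + ‖x‖ ^ 2) / (s₁ / ((n : ℝ) + 1) + ‖M‖ ^ 2) ^ 2 -
        ‖M‖ ^ 2 / (s₁ / ((n : ℝ) + 1) + ‖M‖ ^ 2)) ≤
    K * ((1 + wStat ((n : ℝ) + 1) M s₁)⁻¹ - (1 + wStat (n : ℝ) x s)⁻¹) +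
      2 * ν * Real.log ((1 + wStat ((n : ℝ) + 1) M s₁)⁻¹ / (1 + wStat (n : ℝ) x s)⁻¹) := by
  have hn' : (2 : ℝ) ≤ n := by exact_mod_cast hn
  have hn0 : (0 : ℝ) < n := by linarith
  have hn1 : (0 : ℝ) < (n : ℝ) + 1 := by linarith
  have hq1 : 0 < s₁ / ((n : ℝ) + 1) + ‖M‖ ^ 2 := by positivity
  have hq0 : 0 < s / n + ‖x‖ ^ 2 := by positivity
  have htan := tangent_sq_div M x hq0 hq1
  have hw1 := wStat_nonneg hn1.le M hs₁
  have hw0 := wStat_nonneg hn0.le x hs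
  have ev1 : (1 + wStat ((n : ℝ) + 1) M s₁)⁻¹ =
      s₁ / (((n : ℝ) + 1) * (s₁ / ((n : ℝ) + 1) + ‖M‖ ^ 2)) := by
    unfold wStat; field_simp
  have eu1 : ‖M‖ ^ 2 / (s₁ / ((n : ℝ) + 1) + ‖M‖ ^ 2) = 1 - (1 + wStat ((n : ℝ) + 1) M s₁)⁻¹ := by
    unfold wStat; field_simp; ring
  have eu0 : ‖x‖ ^ 2 / (s / n + ‖x‖ ^ 2) = 1 - (1 + wStat (n : ℝ) x s)⁻¹ := by
    unfold wStat; field_simp; ring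
  have ei : ((n : ℝ) + 1) * (s₁ / ((n : ℝ) + 1) + ‖M‖ ^ 2) / s₁ =
      ((1 + wStat ((n : ℝ) + 1) M s₁)⁻¹)⁻¹ := by
    rw [ev1, inv_div]
  rw [eu0] at htan
  rw [eu1, ei]
  have hv1 : 0 < (1 + wStat ((n : ℝ) + 1) M s₁)⁻¹ := by positivity
  have hv0 : 0 < (1 + wStat (n : ℝ) x s)⁻¹ := by positivity
  set v₁ := (1 + wStat ((n : ℝ) + 1) M s₁)⁻¹
  set v₀ := (1 + wStat (n : ℝ) x s)⁻¹
  have hlog : v₁⁻¹ * (v₁ - v₀) ≤ Real.log (v₁ / v₀) := by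
    have h := Real.one_sub_inv_le_log_of_pos (div_pos hv1 hv0)
    refine le_trans (le_of_eq ?_) h
    field_simp
  have hc : 0 ≤ K + 2 * ν * v₁⁻¹ := by positivity
  calc _ ≤ (K + 2 * ν * v₁⁻¹) * (v₁ - v₀) := by
        refine mul_le_mul_of_nonneg_left ?_ hc
        linarith
    _ = K * (v₁ - v₀) + 2 * ν * (v₁⁻¹ * (v₁ - v₀)) := by ring
    _ ≤ _ := by gcongr

/-- Averaging over `±e` cancels the inner products, leaving a multiple of
`s - (n-1)c‖e‖²` with `c = n/(n+1)`. -/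
lemma excess_symm_ge {d n : ℕ} {K ν : ℝ} (hn : 2 ≤ n) (hK : 0 ≤ K) (hν : 0 ≤ ν)
    (M e : Euc d) {s s₁ : ℝ} (hs : 0 < s) (hs₁ : s₁ = s + (n : ℝ) / ((n : ℝ) + 1) * ‖e‖ ^ 2)
    {E : Euc d → ℝ}
    (hE : ∀ x, K * ((1 + wStat ((n : ℝ) + 1) M s₁)⁻¹ - (1 + wStat (n : ℝ) x s)⁻¹) +
      2 * ν * Real.log ((1 + wStat ((n : ℝ) + 1) M s₁)⁻¹ / (1 + wStat (n : ℝ) x s)⁻¹) ≤ E x) :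
    2 * (-tangentWeight K ν n (‖M‖ ^ 2) s₁ *
        (s - ((n : ℝ) - 1) * ((n : ℝ) / ((n : ℝ) + 1)) * ‖e‖ ^ 2)) ≤
      E (M - ((n : ℝ) + 1)⁻¹ • e) + E (M - ((n : ℝ) + 1)⁻¹ • (-e)) := by
  have hn' : (2 : ℝ) ≤ n := by exact_mod_cast hn
  have hn0 : (0 : ℝ) < n := by linarith
  have hn1 : (0 : ℝ) < (n : ℝ) + 1 := by linarith
  have hs10 : 0 < s₁ := by rw [hs₁]; positivity
  have h1 := (excess_ge hn hK hν M (M - ((n : ℝ) + 1)⁻¹ • e) hs hs10).trans (hE _)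
  have h2 := (excess_ge hn hK hν M (M - ((n : ℝ) + 1)⁻¹ • (-e)) hs hs10).trans (hE _)
  refine le_trans (le_of_eq ?_) (add_le_add h1 h2)
  have hq1 : 0 < s₁ / ((n : ℝ) + 1) + ‖M‖ ^ 2 := by positivity
  rw [smul_neg, sub_neg_eq_add, @norm_sub_sq_real, @norm_add_sq_real, inner_sub_right,
    inner_add_right, real_inner_self_eq_norm_sq, norm_smul, inner_smul_right,
    Real.norm_of_nonneg (inv_pos.2 hn1).le, tangentWeight]
  have hs' : s = s₁ - (n : ℝ) / ((n : ℝ) + 1) * ‖e‖ ^ 2 := by rw [hs₁]; ring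
  clear h1 h2 hE hs₁
  subst hs'
  set I : ℝ := inner ℝ M e
  set r := ‖e‖
  set m := ‖M‖ ^ 2
  set q := s₁ / ((n : ℝ) + 1) + m with hq
  set A := K + 2 * ν * (((n : ℝ) + 1) * q / s₁)
  have hs₁q : s₁ = ((n : ℝ) + 1) * (q - m) := by rw [hq]; field_simp; ring
  rw [hs₁q]
  field_simp
  ring

/-! ### Change of variables and the joint density -/

/-- The pair `(x̄_n, y)` expressed through `M = x̄_{n+1}` and `e = y - x̄_n`. -/
def pairMap (d n : ℕ) (p : Euc d × ℝ × Euc d) : ℝ × Euc d × Euc d :=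
  (p.2.1, (p.1 - ((n : ℝ) + 1)⁻¹ • p.2.2, (p.1 - ((n : ℝ) + 1)⁻¹ • p.2.2) + p.2.2))

/-- Base measure for the variables `(s_n, x̄_n, y)`. -/
abbrev sampleMeasure (d : ℕ) : Measure (ℝ × Euc d × Euc d) :=
  ((volume : Measure ℝ).restrict (Ioi 0)).prod ((volume : Measure (Euc d)).prod volume)

/-- Base measure for the variables `(x̄_{n+1}, s_n, y - x̄_n)`. -/
abbrev pooledMeasure (d : ℕ) : Measure (Euc d × ℝ × Euc d) :=
  (volume : Measure (Euc d)).prod (((volume : Measure ℝ).restrict (Ioi 0)).prod volume)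

lemma measurePreserving_pairMap (d n : ℕ) :
    MeasurePreserving (pairMap d n) (pooledMeasure d) (sampleMeasure d) := by
  have h1 : MeasurePreserving (Prod.swap : Euc d × (ℝ × Euc d) → (ℝ × Euc d) × Euc d)
      (pooledMeasure d) ((((volume : Measure ℝ).restrict (Ioi 0)).prod volume).prod volume) :=
    Measure.measurePreserving_swap
  have h2 : MeasurePreserving
      (fun p : (ℝ × Euc d) × Euc d => (id p.1, p.2 - ((n : ℝ) + 1)⁻¹ • p.1.2))
      ((((volume : Measure ℝ).restrict (Ioi 0)).prod (volume : Measure (Euc d))).prod volume)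
      ((((volume : Measure ℝ).restrict (Ioi 0)).prod volume).prod volume) := by
    refine MeasurePreserving.skew_product
      (g := fun (a : ℝ × Euc d) (b : Euc d) => b - ((n : ℝ) + 1)⁻¹ • a.2)
      (MeasurePreserving.id _) (by unfold Function.uncurry; fun_prop) ?_
    exact Filter.Eventually.of_forall fun a =>
      (measurePreserving_sub_right volume (((n : ℝ) + 1)⁻¹ • a.2)).map_eq
  have h3 := measurePreserving_prodAssoc ((volume : Measure ℝ).restrict (Ioi 0))
    (volume : Measure (Euc d)) (volume : Measure (Euc d))
  have h4 : MeasurePreserving (Prod.map id Prod.swap : ℝ × Euc d × Euc d → ℝ × Euc d × Euc d)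
      (sampleMeasure d) (sampleMeasure d) :=
    (MeasurePreserving.id _).prod Measure.measurePreserving_swap
  have h5 : MeasurePreserving
      (Prod.map id (fun z : Euc d × Euc d => (z.1, z.1 + z.2)) :
        ℝ × Euc d × Euc d → ℝ × Euc d × Euc d)
      (sampleMeasure d) (sampleMeasure d) :=
    (MeasurePreserving.id _).prod (measurePreserving_prod_add volume volume)
  exact h5.comp (h4.comp (h3.comp (h2.comp h1)))

lemma measurePreserving_flip (d : ℕ) :
    MeasurePreserving (fun p : Euc d × ℝ × Euc d => (p.1, p.2.1, -p.2.2))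
      (pooledMeasure d) (pooledMeasure d) :=
  (MeasurePreserving.id _).prod ((MeasurePreserving.id _).prod (Measure.measurePreserving_neg _))

lemma ae_pos_pooled (d : ℕ) : ∀ᵐ p ∂(pooledMeasure d), 0 < p.2.1 := by
  have h : Measure.QuasiMeasurePreserving (fun p : Euc d × ℝ × Euc d => p.2.1)
      (pooledMeasure d) ((volume : Measure ℝ).restrict (Ioi 0)) :=
    Measure.quasiMeasurePreserving_fst.comp Measure.quasiMeasurePreserving_snd
  exact h.ae (ae_restrict_mem measurableSet_Ioi)

lemma newMean_pairMap {d : ℕ} (n : ℕ) (M e : Euc d) :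
    newMean n (M - ((n : ℝ) + 1)⁻¹ • e) (M - ((n : ℝ) + 1)⁻¹ • e + e) = M := by
  have : (n : ℝ) + 1 ≠ 0 := by positivity
  unfold newMean
  match_scalars <;> field_simp
  ring

lemma newS_pairMap {d : ℕ} (n : ℕ) (x e : Euc d) (s : ℝ) :
    newS n x (x + e) s = s + (n : ℝ) / ((n : ℝ) + 1) * ‖e‖ ^ 2 := by
  unfold newS
  rw [add_sub_cancel_left]
  ring

/-- The joint density of `(s_n, x̄_n, y)`. -/
def jointDens (d n : ℕ) (μ0 : Euc d) (σ2 : ℝ) (p : ℝ × Euc d × Euc d) : ℝ :=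
  gaussPdf d p.2.1 μ0 (σ2 / n) * (chiSqPdf (((n : ℝ) - 1) * d) (p.1 / σ2) / σ2) *
    gaussPdf d p.2.2 μ0 σ2

/-- The normalising constant of `jointDens`. -/
def densConst (d n : ℕ) (σ2 : ℝ) : ℝ :=
  (2 * Real.pi * (σ2 / n)) ^ (-(d : ℝ) / 2) * (2 * Real.pi * σ2) ^ (-(d : ℝ) / 2) *
    ((σ2 ^ (((n : ℝ) - 1) * d / 2 - 1))⁻¹ /
      ((2 : ℝ) ^ (((n : ℝ) - 1) * d / 2) * Real.Gamma (((n : ℝ) - 1) * d / 2)) / σ2)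

lemma densConst_nonneg {d n : ℕ} (hd : 1 ≤ d) (hn : 2 ≤ n) {σ2 : ℝ} (hσ : 0 < σ2) :
    0 ≤ densConst d n σ2 := by
  have hn' : (2 : ℝ) ≤ n := by exact_mod_cast hn
  have hd' : (1 : ℝ) ≤ d := by exact_mod_cast hd
  have hp : 0 < ((n : ℝ) - 1) * d / 2 := by
    have : 0 < (n : ℝ) - 1 := by linarith
    positivity
  have := Real.Gamma_pos_of_pos hp
  unfold densConst
  positivity

/-- In the pooled variables the density splits: it depends on `(s, e)` through a power of `s` and
`s + c‖e‖² = s_{n+1}`. -/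
lemma jointDens_pairMap {d n : ℕ} (hn : 2 ≤ n) {σ2 : ℝ} (hσ : 0 < σ2) (μ0 M e : Euc d) {s : ℝ}
    (hs : 0 < s) :
    jointDens d n μ0 σ2 (pairMap d n (M, s, e)) =
      densConst d n σ2 * (Real.exp (-(((n : ℝ) + 1) / (2 * σ2)) * ‖M - μ0‖ ^ 2) *
        (s ^ (((n : ℝ) - 1) * d / 2 - 1) *
          Real.exp (-(s + (n : ℝ) / ((n : ℝ) + 1) * ‖e‖ ^ 2) / (2 * σ2)))) := by
  have hn' : (2 : ℝ) ≤ n := by exact_mod_cast hn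
  have hn0 : (n : ℝ) ≠ 0 := by linarith
  have hn1 : (n : ℝ) + 1 ≠ 0 := by linarith
  simp only [jointDens, pairMap, gaussPdf, chiSqPdf, densConst]
  rw [Real.div_rpow hs.le hσ.le]
  have hexp : Real.exp (-‖M - ((n : ℝ) + 1)⁻¹ • e - μ0‖ ^ 2 / (2 * (σ2 / n))) *
      Real.exp (-(s / σ2) / 2) *
      Real.exp (-‖M - ((n : ℝ) + 1)⁻¹ • e + e - μ0‖ ^ 2 / (2 * σ2)) =
      Real.exp (-(((n : ℝ) + 1) / (2 * σ2)) * ‖M - μ0‖ ^ 2) *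
        Real.exp (-(s + (n : ℝ) / ((n : ℝ) + 1) * ‖e‖ ^ 2) / (2 * σ2)) := by
    rw [← Real.exp_add, ← Real.exp_add, ← Real.exp_add]
    congr 1
    have e1 : M - ((n : ℝ) + 1)⁻¹ • e - μ0 = (M - μ0) - ((n : ℝ) + 1)⁻¹ • e := by abel
    have e2 : M - ((n : ℝ) + 1)⁻¹ • e + e - μ0 = (M - μ0) + ((n : ℝ) / ((n : ℝ) + 1)) • e := by
      match_scalars <;> field_simp
      ring
    rw [e1, e2, @norm_sub_sq_real, @norm_add_sq_real, inner_smul_right, inner_smul_right,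
      norm_smul, norm_smul, Real.norm_of_nonneg (by positivity),
      Real.norm_of_nonneg (by positivity)]
    field_simp
    ring
  linear_combination ((2 * Real.pi * (σ2 / n)) ^ (-(d : ℝ) / 2) *
    (2 * Real.pi * σ2) ^ (-(d : ℝ) / 2) * s ^ (((n : ℝ) - 1) * d / 2 - 1) *
    ((σ2 ^ (((n : ℝ) - 1) * d / 2 - 1))⁻¹ /
      ((2 : ℝ) ^ (((n : ℝ) - 1) * d / 2) * Real.Gamma (((n : ℝ) - 1) * d / 2)) / σ2)) * hexp

lemma integrable_exp_neg_sq_norm {d : ℕ} {b : ℝ} (hb : 0 < b) (a : Euc d) :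
    Integrable (fun x : Euc d => Real.exp (-b * ‖x - a‖ ^ 2)) := by
  have h := (GaussianFourier.integrable_cexp_neg_mul_sq_norm_add (V := Euc d) (b := (b : ℂ))
    (by simpa using hb) 0 0).norm
  have h2 : Integrable (fun x : Euc d => Real.exp (-b * ‖x‖ ^ 2)) := by
    refine h.congr (Filter.Eventually.of_forall fun x => ?_)
    simp only [Complex.norm_exp]
    congr 1
    simp
    norm_cast
    exact Or.inl rfl
  exact h2.comp_sub_right a

/-! ### Assembling the bound -/

/-- The symmetrised minorant: density times tangent term, in the pooled variables. -/
def minorant (d n : ℕ) (ν : ℝ) (μ0 : Euc d) (σ2 K : ℝ) (p : Euc d × ℝ × Euc d) : ℝ :=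
  densConst d n σ2 * Real.exp (-(((n : ℝ) + 1) / (2 * σ2)) * ‖p.1 - μ0‖ ^ 2) *
    (p.2.1 ^ (((n : ℝ) - 1) * d / 2 - 1) *
      ((p.2.1 - ((n : ℝ) - 1) * ((n : ℝ) / ((n : ℝ) + 1)) * ‖p.2.2‖ ^ 2) *
        (fun x => -tangentWeight K ν n (‖p.1‖ ^ 2) x * Real.exp (-x / (2 * σ2)))
          (p.2.1 + (n : ℝ) / ((n : ℝ) + 1) * ‖p.2.2‖ ^ 2)))

lemma integrable_minorant {d n : ℕ} (hd : 1 ≤ d) (hn : 2 ≤ n) {ν σ2 K : ℝ} (hν : 0 ≤ ν)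
    (hσ : 0 < σ2) (hK : 0 ≤ K) (μ0 : Euc d) :
    Integrable (minorant d n ν μ0 σ2 K) (pooledMeasure d) := by
  have hn' : (2 : ℝ) ≤ n := by exact_mod_cast hn
  have hd' : (1 : ℝ) ≤ d := by exact_mod_cast hd
  have hn1 : (0 : ℝ) < (n : ℝ) + 1 := by linarith
  have hp : 0 < ((n : ℝ) - 1) * d / 2 := by
    have : 0 < (n : ℝ) - 1 := by linarith
    positivity
  have hc : 0 < (n : ℝ) / ((n : ℝ) + 1) := by positivity
  have hκ := densConst_nonneg hd hn hσ
  have i1 := integrable_exp_neg_sq_norm (show 0 < ((n : ℝ) + 1) / (2 * σ2) by positivity) μ0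
  have i2 := integrable_exp_neg_sq_norm
    (show 0 < (n : ℝ) / ((n : ℝ) + 1) / (2 * σ2) by positivity) (0 : Euc d)
  have i3 : IntegrableOn (fun x : ℝ => x ^ (((n : ℝ) - 1) * d / 2 - 1) *
      Real.exp (-(1 / (2 * σ2)) * x ^ (1 : ℝ))) (Ioi 0) :=
    integrableOn_rpow_mul_exp_neg_mul_rpow (by linarith) one_pos (by positivity)
  have i4 := ((i1.mul_prod (i3.mul_prod i2)).const_mul
    (densConst d n σ2 * ((K + 2 * ν) * (n : ℝ))))
  refine i4.mono' ?_ ?_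
  · refine Measurable.aestronglyMeasurable ?_
    have hm : Measurable (fun p : Euc d × ℝ × Euc d => tangentWeight K ν n (‖p.1‖ ^ 2)
        (p.2.1 + (n : ℝ) / ((n : ℝ) + 1) * ‖p.2.2‖ ^ 2)) := by
      unfold tangentWeight; fun_prop
    unfold minorant
    fun_prop
  · filter_upwards [ae_pos_pooled d] with p hs
    obtain ⟨M, s, e⟩ := p
    simp only at hs
    set x := s + (n : ℝ) / ((n : ℝ) + 1) * ‖e‖ ^ 2 with hx
    have hr : 0 ≤ (n : ℝ) / ((n : ℝ) + 1) * ‖e‖ ^ 2 := by positivity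
    have hx0 : 0 < x := by linarith
    obtain ⟨ht0, ht1⟩ := tangentWeight_mul_le (K := K) (ν := ν) hn hK hν (sq_nonneg ‖M‖) hx0
    have habs : |s - ((n : ℝ) - 1) * ((n : ℝ) / ((n : ℝ) + 1)) * ‖e‖ ^ 2| ≤ (n : ℝ) * x := by
      rw [abs_le]
      constructor <;> nlinarith
    have hprod : |s - ((n : ℝ) - 1) * ((n : ℝ) / ((n : ℝ) + 1)) * ‖e‖ ^ 2| *
        tangentWeight K ν n (‖M‖ ^ 2) x ≤ (K + 2 * ν) * n := by
      calc _ ≤ ((n : ℝ) * x) * tangentWeight K ν n (‖M‖ ^ 2) x := by gcongr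
        _ = (tangentWeight K ν n (‖M‖ ^ 2) x * x) * n := by ring
        _ ≤ _ := by gcongr
    have hexp : Real.exp (-x / (2 * σ2)) = Real.exp (-(1 / (2 * σ2)) * s ^ (1 : ℝ)) *
        Real.exp (-((n : ℝ) / ((n : ℝ) + 1) / (2 * σ2)) * ‖e - 0‖ ^ 2) := by
      rw [← Real.exp_add, Real.rpow_one, sub_zero, hx]; congr 1; field_simp; ring
    simp only [minorant]
    rw [← hx, mul_assoc (s ^ _) (Real.exp _), ← hexp]
    simp only [norm_mul, norm_neg, Real.norm_eq_abs, Real.abs_exp, abs_of_nonneg hκ,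
      abs_of_nonneg ht0, abs_of_pos (Real.rpow_pos_of_pos hs _)]
    have hW : 0 ≤ densConst d n σ2 * Real.exp (-(((n : ℝ) + 1) / (2 * σ2)) * ‖M - μ0‖ ^ 2) *
        (s ^ (((n : ℝ) - 1) * d / 2 - 1) * Real.exp (-x / (2 * σ2))) := by positivity
    refine le_trans (le_of_eq ?_) ((mul_le_mul_of_nonneg_left hprod hW).trans (le_of_eq ?_)) <;> ring

lemma integral_minorant {d n : ℕ} (hd : 1 ≤ d) (hn : 2 ≤ n) {ν σ2 K : ℝ} (hν : 0 ≤ ν)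
    (hσ : 0 < σ2) (hK : 0 ≤ K) (μ0 : Euc d) :
    ∫ p, minorant d n ν μ0 σ2 K p ∂(pooledMeasure d) = 0 := by
  have hn' : (2 : ℝ) ≤ n := by exact_mod_cast hn
  rw [integral_prod _ (integrable_minorant hd hn hν hσ hK μ0)]
  refine integral_eq_zero_of_ae (Filter.Eventually.of_forall fun M => ?_)
  simp only [minorant, Pi.zero_apply]
  rw [integral_const_mul]
  have hm : Measurable (fun x : ℝ => -tangentWeight K ν n (‖M‖ ^ 2) x *
      Real.exp (-x / (2 * σ2))) := by
    have : Measurable (fun x : ℝ => tangentWeight K ν n (‖M‖ ^ 2) x) := by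
      unfold tangentWeight; fun_prop
    fun_prop
  have h := integral_cond_mean_zero (d := d) hd hn
    (show 0 < (n : ℝ) / ((n : ℝ) + 1) by positivity) hm
  rw [h, mul_zero]

/-- The logarithm whose expectation the theorem bounds. -/
def logRatio (d n : ℕ) (ν : ℝ) (xbar : Euc d) (s : ℝ) (y : Euc d) : ℝ :=
  Real.log (betaFun ν (((n : ℝ) - 1) * d / 2) / betaFun ν ((n : ℝ) * d / 2) *
    (Jquant d ν (qLow d n ν) ((n : ℝ) + 1)
        (wStat ((n : ℝ) + 1) (newMean n xbar y) (newS n xbar y s)) /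
      Jquant d ν (qLow d n ν) (n : ℝ) (wStat (n : ℝ) xbar s)) *
    ((1 - uStat ((n : ℝ) + 1) (newMean n xbar y) (newS n xbar y s)) ^ ν /
      (1 - uStat (n : ℝ) xbar s) ^ ν))

lemma minorant_le {d n : ℕ} (hd : 1 ≤ d) (hn : 2 ≤ n) {ν σ2 : ℝ} (hν0 : 0 < ν) (hν1 : ν < 1)
    (hσ : 0 < σ2) (μ0 M e : Euc d) {s : ℝ} (hs : 0 < s) {f : ℝ × Euc d × Euc d → ℝ}
    (hf : ∀ p, f p = jointDens d n μ0 σ2 p * logRatio d n ν p.2.1 p.1 p.2.2 -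
      ν * gFun n d ν * (jointDens d n μ0 σ2 p * (1 - uStat (n : ℝ) p.2.1 p.1))) :
    2 * minorant d n ν μ0 σ2 (ν * gFun n d ν) (M, s, e) ≤
      f (pairMap d n (M, s, e)) + f (pairMap d n (M, s, -e)) := by
  have hn' : (2 : ℝ) ≤ n := by exact_mod_cast hn
  have hn0 : (0 : ℝ) ≤ n := by linarith
  have hn1 : (0 : ℝ) ≤ (n : ℝ) + 1 := by linarith
  have hK : 0 ≤ ν * gFun n d ν := (gFun_log_bound (w := 0) hd hn hν0 hν1 le_rfl).1
  set K := ν * gFun n d ν with hKdef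
  have hs1 : 0 < s + (n : ℝ) / ((n : ℝ) + 1) * ‖e‖ ^ 2 := by positivity
  set s₁ := s + (n : ℝ) / ((n : ℝ) + 1) * ‖e‖ ^ 2 with hs₁
  have hE := excess_symm_ge (K := K) (ν := ν) hn hK hν0.le M e hs hs₁
    (E := fun x => Real.log (betaFun ν (((n : ℝ) - 1) * d / 2) / betaFun ν ((n : ℝ) * d / 2) *
      (Jquant d ν (qLow d n ν) ((n : ℝ) + 1) (wStat ((n : ℝ) + 1) M s₁) /
        Jquant d ν (qLow d n ν) (n : ℝ) (wStat (n : ℝ) x s)) *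
      ((1 - uStat ((n : ℝ) + 1) M s₁) ^ ν / (1 - uStat (n : ℝ) x s) ^ ν)) -
      K * (1 - uStat (n : ℝ) x s)) (by
    intro x
    rw [one_sub_uStat hn1 M hs1, one_sub_uStat hn0 x hs]
    have := log_ratio_ge hd hn hν0 hν1 (wStat_nonneg hn0 x hs) (wStat_nonneg hn1 M hs1)
    linarith)
  have hd1 := jointDens_pairMap hn hσ μ0 M e hs
  have hd2 := jointDens_pairMap hn hσ μ0 M (-e) hs
  rw [norm_neg] at hd2
  rw [hf, hf, hd1, hd2]
  simp only [pairMap, logRatio, newMean_pairMap, newS_pairMap, norm_neg]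
  rw [← hs₁]
  have hρ : 0 ≤ densConst d n σ2 * (Real.exp (-(((n : ℝ) + 1) / (2 * σ2)) * ‖M - μ0‖ ^ 2) *
      (s ^ (((n : ℝ) - 1) * d / 2 - 1) * Real.exp (-s₁ / (2 * σ2)))) := by
    have := densConst_nonneg hd hn hσ
    positivity
  refine le_trans (le_of_eq ?_) ((mul_le_mul_of_nonneg_left hE hρ).trans (le_of_eq ?_))
  · simp only [minorant]
    rw [← hs₁]
    ring
  · beta_reduce
    ring

lemma expVal_eq {d n : ℕ} {μ0 : Euc d} {σ2 : ℝ} {f : Euc d → ℝ → Euc d → ℝ}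
    (h : Integrable (fun p => jointDens d n μ0 σ2 p * f p.2.1 p.1 p.2.2) (sampleMeasure d)) :
    expVal d n μ0 σ2 f =
      ∫ p, jointDens d n μ0 σ2 p * f p.2.1 p.1 p.2.2 ∂(sampleMeasure d) := by
  rw [integral_prod _ h]
  refine integral_congr_ae ?_
  filter_upwards [h.prod_right_ae] with s hs
  rw [integral_prod _ hs]
  rfl
/-- Lemma A2: lower bound for the expectation of the logarithm of the
`J`-ratio term, for the choice of `q` given by equation (5). -/
theorem stmt_5 (d n : ℕ) (hd : 1 ≤ d) (hn : 2 ≤ n)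
    (ν : ℝ) (hν0 : 0 < ν) (hν1 : ν < 1)
    (μ0 : Euc d) (σ2 : ℝ) (hσ : 0 < σ2)
    -- the expectations involved are assumed to exist:
    (hInt_log : Integrable (fun p : ℝ × Euc d × Euc d =>
        gaussPdf d p.2.1 μ0 (σ2 / n) * (chiSqPdf (((n : ℝ) - 1) * d) (p.1 / σ2) / σ2) *
          gaussPdf d p.2.2 μ0 σ2 *
          Real.log (betaFun ν (((n : ℝ) - 1) * d / 2) / betaFun ν ((n : ℝ) * d / 2) *
            (Jquant d ν (qLow d n ν) ((n : ℝ) + 1)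
                (wStat ((n : ℝ) + 1) (newMean n p.2.1 p.2.2) (newS n p.2.1 p.2.2 p.1)) /
              Jquant d ν (qLow d n ν) (n : ℝ) (wStat (n : ℝ) p.2.1 p.1)) *
            ((1 - uStat ((n : ℝ) + 1) (newMean n p.2.1 p.2.2) (newS n p.2.1 p.2.2 p.1)) ^ ν /
              (1 - uStat (n : ℝ) p.2.1 p.1) ^ ν)))
      (((volume : Measure ℝ).restrict (Ioi 0)).prod ((volume : Measure (Euc d)).prod volume)))
    (hInt_u : Integrable (fun p : ℝ × Euc d × Euc d =>
        gaussPdf d p.2.1 μ0 (σ2 / n) * (chiSqPdf (((n : ℝ) - 1) * d) (p.1 / σ2) / σ2) *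
          gaussPdf d p.2.2 μ0 σ2 * (1 - uStat (n : ℝ) p.2.1 p.1))
      (((volume : Measure ℝ).restrict (Ioi 0)).prod ((volume : Measure (Euc d)).prod volume))) :
    expVal d n μ0 σ2 (fun xbar s y =>
        Real.log (betaFun ν (((n : ℝ) - 1) * d / 2) / betaFun ν ((n : ℝ) * d / 2) *
          (Jquant d ν (qLow d n ν) ((n : ℝ) + 1)
              (wStat ((n : ℝ) + 1) (newMean n xbar y) (newS n xbar y s)) /
            Jquant d ν (qLow d n ν) (n : ℝ) (wStat (n : ℝ) xbar s)) *
          ((1 - uStat ((n : ℝ) + 1) (newMean n xbar y) (newS n xbar y s)) ^ ν /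
            (1 - uStat (n : ℝ) xbar s) ^ ν))) ≥
      ν * gFun n d ν * expVal d n μ0 σ2 (fun xbar s _y => 1 - uStat (n : ℝ) xbar s) := by
  have hL : Integrable (fun p => jointDens d n μ0 σ2 p * logRatio d n ν p.2.1 p.1 p.2.2)
      (sampleMeasure d) := hInt_log
  have hU : Integrable (fun p => jointDens d n μ0 σ2 p * (1 - uStat (n : ℝ) p.2.1 p.1))
      (sampleMeasure d) := hInt_u
  change ν * gFun n d ν * expVal d n μ0 σ2 (fun xbar s _y => 1 - uStat (n : ℝ) xbar s) ≤
    expVal d n μ0 σ2 (logRatio d n ν)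
  rw [expVal_eq hL, expVal_eq (f := fun xbar s _y => 1 - uStat (n : ℝ) xbar s) hU,
    ← sub_nonneg, ← integral_const_mul, ← integral_sub hL (hU.const_mul _)]
  have hf := hL.sub (hU.const_mul (ν * gFun n d ν))
  set f : ℝ × Euc d × Euc d → ℝ := fun p =>
    jointDens d n μ0 σ2 p * logRatio d n ν p.2.1 p.1 p.2.2 -
      ν * gFun n d ν * (jointDens d n μ0 σ2 p * (1 - uStat (n : ℝ) p.2.1 p.1)) with hfdef
  replace hf : Integrable f (sampleMeasure d) := hf
  have hK : 0 ≤ ν * gFun n d ν := (gFun_log_bound (w := 0) hd hn hν0 hν1 le_rfl).1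
  have hψ := measurePreserving_pairMap d n
  have hφ := hψ.comp (measurePreserving_flip d)
  have hi1 := hψ.integrable_comp_of_integrable hf
  have hi2 := hφ.integrable_comp_of_integrable hf
  have e1 : ∫ p, f (pairMap d n p) ∂(pooledMeasure d) = ∫ p, f p ∂(sampleMeasure d) := by
    rw [← hψ.map_eq, integral_map hψ.measurable.aemeasurable]
    rw [hψ.map_eq]; exact hf.aestronglyMeasurable
  have e2 : ∫ p, f (pairMap d n (p.1, p.2.1, -p.2.2)) ∂(pooledMeasure d) =
      ∫ p, f p ∂(sampleMeasure d) := by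
    rw [← hφ.map_eq, integral_map hφ.measurable.aemeasurable]
    · rfl
    · rw [hφ.map_eq]; exact hf.aestronglyMeasurable
  -- the sum of the integrand and its reflection dominates a function of vanishing integral
  have hmono : ∫ p, 2 * minorant d n ν μ0 σ2 (ν * gFun n d ν) p ∂(pooledMeasure d) ≤
      ∫ p, (f (pairMap d n p) + f (pairMap d n (p.1, p.2.1, -p.2.2))) ∂(pooledMeasure d) := by
    refine integral_mono_ae ((integrable_minorant hd hn hν0.le hσ hK μ0).const_mul 2)
      (hi1.add hi2) ?_
    filter_upwards [ae_pos_pooled d] with p hs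
    exact minorant_le hd hn hν0 hν1 hσ μ0 p.1 p.2.2 hs (fun _ => rfl)
  have hadd : ∫ p, (f (pairMap d n p) + f (pairMap d n (p.1, p.2.1, -p.2.2))) ∂(pooledMeasure d) =
      ∫ p, f (pairMap d n p) ∂(pooledMeasure d) +
        ∫ p, f (pairMap d n (p.1, p.2.1, -p.2.2)) ∂(pooledMeasure d) := integral_add hi1 hi2
  rw [integral_const_mul, integral_minorant hd hn hν0.le hσ hK, hadd, e1, e2] at hmono
  linarith

end
end

section
/- Let n = 2 and let d be an integer with 1 ≤ d ≤ 4. Then there exists a constant ν* > 0, depending only on d, such that for every ν with 0 < ν ≤ ν*, g(2, d, ν) − h(2, d) ≥ 0. -/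
/-!
Both branches of `g(2, d, ν)` are difference quotients at `ν = 0`, so `g` has a limit as `ν → 0⁺`,
and it suffices that this limit exceeds `h(2, d)` strictly.

For `d ≤ 2` the factor `Γ(ν)` cancels in the quotient of Beta functions, and the limit is
`ψ(d) - ψ(d/2)` (`tendsto_gFun_low`); for `d ≥ 3` the limit is `d / (2 (d - 1))`, because
`log (1 + ν) / ν → 1` (`tendsto_gFun_high`). The recurrence `ψ(x + 1) = ψ(x) + 1/x` with
`ψ(1) = -γ` and `ψ(1/2) = -γ - 2 log 2` makes both sides explicit: the limit and `h(2, d)` are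
`2 log 2` and `25/6 - 5 log 2` for `d = 1`, `1` and `2/3` for `d = 2`,
`3/4` and `(11/6) (1097/630 - 2 log 2)` for `d = 3`, and `2/3` and `77/120` for `d = 4`.
The odd cases use the decimal lower bound `0.6931471803 < log 2`.
-/

open MeasureTheory Set

noncomputable section

/-! ### The digamma function -/

lemma differentiableAt_Gamma_of_pos {x : ℝ} (hx : 0 < x) : DifferentiableAt ℝ Real.Gamma x :=
  Real.differentiableAt_Gamma fun m h => by
    have : (0 : ℝ) ≤ m := m.cast_nonneg
    linarith

lemma hasDerivAt_logGamma {x : ℝ} (hx : 0 < x) :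
    HasDerivAt (fun y => Real.log (Real.Gamma y)) (digamma x) x :=
  ((differentiableAt_Gamma_of_pos hx).log (Real.Gamma_pos_of_pos hx).ne').hasDerivAt

lemma digamma_eq_div {x : ℝ} (hx : 0 < x) :
    digamma x = deriv Real.Gamma x / Real.Gamma x :=
  ((differentiableAt_Gamma_of_pos hx).hasDerivAt.log (Real.Gamma_pos_of_pos hx).ne').deriv

lemma digamma_add_one {x : ℝ} (hx : 0 < x) : digamma (x + 1) = digamma x + 1 / x := by
  have h1 : HasDerivAt (fun y : ℝ => Real.log (Real.Gamma (y + 1))) (digamma (x + 1)) x := by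
    simpa using (hasDerivAt_logGamma (x := x + 1) (by linarith)).comp_add_const x 1
  have h2 : HasDerivAt (fun y : ℝ => Real.log (Real.Gamma y) + Real.log y)
      (digamma x + x⁻¹) x := (hasDerivAt_logGamma hx).add (Real.hasDerivAt_log hx.ne')
  have h3 : (fun y : ℝ => Real.log (Real.Gamma (y + 1))) =ᶠ[nhds x]
      (fun y : ℝ => Real.log (Real.Gamma y) + Real.log y) := by
    filter_upwards [lt_mem_nhds hx] with y hy
    rw [Real.Gamma_add_one hy.ne', Real.log_mul hy.ne' (Real.Gamma_pos_of_pos hy).ne', add_comm]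
  rw [one_div]
  exact h1.unique (h2.congr_of_eventuallyEq h3)

lemma digamma_one : digamma 1 = -Real.eulerMascheroniConstant := by
  rw [digamma_eq_div one_pos, Real.hasDerivAt_Gamma_one.deriv, Real.Gamma_one, div_one]

lemma digamma_one_half :
    digamma (1 / 2) = -Real.eulerMascheroniConstant - 2 * Real.log 2 := by
  have hpi : √Real.pi ≠ 0 := (Real.sqrt_pos.mpr Real.pi_pos).ne'
  rw [digamma_eq_div (by norm_num), Real.hasDerivAt_Gamma_one_half.deriv,
    Real.Gamma_one_half_eq]
  field_simp
  ring

/-! ### Limits of `g(2, d, ν)` as `ν → 0⁺` -/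

/-- The quotient `B(ν, (d+ν)/2) / B(ν, d)` in `g(2, d, ν)` equals
`Γ((d+ν)/2) Γ(d+ν) / (Γ((d+3ν)/2) Γ(d))`, so `g(2, d, ν)` is the difference quotient at `0` of the
logarithm of the latter, whose derivative there is `(1/2 - 3/2) ψ(d/2) + ψ(d)`. -/
lemma tendsto_gFun_low (d : ℕ) (hd1 : 1 ≤ d) (hd2 : d ≤ 2) :
    Filter.Tendsto (gFun 2 d) (nhdsWithin 0 (Ioi 0))
      (nhds (digamma d - digamma ((d : ℝ) / 2))) := by
  have hd : (0 : ℝ) < d := by exact_mod_cast hd1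
  let L : ℝ → ℝ := fun y => Real.log (Real.Gamma y)
  let F : ℝ → ℝ := fun ν =>
    L ((1 / 2) * ν + d / 2) - L ((3 / 2) * ν + d / 2) + L (1 * ν + d) - L d
  -- the chain rule for an affine substitution, at `0`
  have aff : ∀ a b : ℝ, 0 < b →
      HasDerivAt (fun ν : ℝ => L (a * ν + b)) (digamma b * a) 0 := by
    intro a b hb
    have h1 : HasDerivAt (fun ν : ℝ => a * ν + b) a 0 := by
      simpa using ((hasDerivAt_id (0 : ℝ)).const_mul a).add_const b
    have h2 : HasDerivAt L (digamma b) (a * 0 + b) := by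
      simpa using hasDerivAt_logGamma hb
    exact h2.comp (0 : ℝ) h1
  have hF : HasDerivAt F (digamma d - digamma ((d : ℝ) / 2)) 0 := by
    have h := (((aff (1 / 2) (d / 2) (by positivity)).sub
      (aff (3 / 2) (d / 2) (by positivity))).add (aff 1 d hd)).sub_const (L d)
    have e : digamma d - digamma ((d : ℝ) / 2) = digamma ((d : ℝ) / 2) * (1 / 2) -
        digamma ((d : ℝ) / 2) * (3 / 2) + digamma d * 1 := by ring
    rw [e]
    exact h
  have hs := hF.tendsto_slope_zero_right
  refine hs.congr' ?_
  filter_upwards [self_mem_nhdsWithin] with ν hν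
  have hν : 0 < ν := hν
  have hF0 : F 0 = 0 := by simp [F]
  have e1 : (((2 : ℕ) : ℝ) * d / 2 - ((d : ℝ) - ν) / ((2 : ℕ) : ℝ)) = (1 / 2) * ν + d / 2 := by
    push_cast; ring
  have e2 : ((2 : ℕ) : ℝ) * d / 2 = d := by push_cast; ring
  have e3 : ν + ((1 / 2) * ν + d / 2) = (3 / 2) * ν + d / 2 := by ring
  have e4 : ν + (d : ℝ) = 1 * ν + d := by ring
  have g0 := (Real.Gamma_pos_of_pos hν).ne'
  have g1 := (Real.Gamma_pos_of_pos (s := (1 / 2) * ν + d / 2) (by positivity)).ne'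
  have g2 := (Real.Gamma_pos_of_pos (s := (3 / 2) * ν + d / 2) (by positivity)).ne'
  have g3 := (Real.Gamma_pos_of_pos (s := 1 * ν + d) (by positivity)).ne'
  have g4 := (Real.Gamma_pos_of_pos hd).ne'
  rw [zero_add, hF0, sub_zero, smul_eq_mul, gFun, if_pos hd2, e1, e2, one_div]
  congr 1
  simp only [betaFun, e3, e4, F, L]
  rw [Real.log_div (div_ne_zero (mul_ne_zero g0 g1) g2) (div_ne_zero (mul_ne_zero g0 g4) g3),
    Real.log_div (mul_ne_zero g0 g1) g2, Real.log_div (mul_ne_zero g0 g4) g3,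
    Real.log_mul g0 g1, Real.log_mul g0 g4]
  ring

lemma tendsto_gFun_high (d : ℕ) (hd3 : 3 ≤ d) :
    Filter.Tendsto (gFun 2 d) (nhdsWithin 0 (Ioi 0))
      (nhds ((1 / 2) * (d / (d - 1)))) := by
  have hlog : HasDerivAt (fun ν : ℝ => Real.log (1 + ν)) 1 0 := by
    have h := ((hasDerivAt_id (0 : ℝ)).const_add 1).log (by simp)
    simpa using h
  have hs := hlog.tendsto_slope_zero_right
  have hc : Filter.Tendsto (fun ν : ℝ => (1 / 2) * (((d : ℝ) - ν) / (d - 1)))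
      (nhdsWithin 0 (Ioi 0)) (nhds ((1 / 2) * (((d : ℝ) - 0) / (d - 1)))) :=
    (Continuous.tendsto (by fun_prop) 0).mono_left nhdsWithin_le_nhds
  have h := hc.mul hs
  rw [sub_zero, mul_one] at h
  refine h.congr fun ν => ?_
  have e2 : ((2 : ℕ) : ℝ) * d / 2 = d := by push_cast; ring
  rw [gFun, if_neg (by omega), e2]
  simp only [zero_add, add_zero, Real.log_one, sub_zero, smul_eq_mul, one_div, mul_inv]
  push_cast
  ring

/-- A limit strictly above `h(2, d)` yields the threshold `ν*`. -/
lemma exists_threshold {d : ℕ} {l : ℝ}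
    (h : Filter.Tendsto (gFun 2 d) (nhdsWithin 0 (Ioi 0)) (nhds l)) (hl : hFun 2 d < l) :
    ∃ νstar : ℝ, 0 < νstar ∧ ∀ ν : ℝ, 0 < ν → ν ≤ νstar → gFun 2 d ν - hFun 2 d ≥ 0 := by
  obtain ⟨u, hu, hsub⟩ := mem_nhdsGT_iff_exists_Ioc_subset.mp (h.eventually (lt_mem_nhds hl))
  refine ⟨u, hu, fun ν h0 h1 => ?_⟩
  have : hFun 2 d < gFun 2 d ν := hsub ⟨h0, h1⟩
  linarith

/-! ### Digamma values and the comparison with `h(2, d)` -/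

lemma digamma_two : digamma 2 = digamma 1 + 1 := by
  have := digamma_add_one (x := 1) (by norm_num)
  norm_num at this ⊢
  exact this

lemma digamma_three : digamma 3 = digamma 1 + 3 / 2 := by
  have := digamma_add_one (x := 2) (by norm_num)
  norm_num [digamma_two] at this ⊢
  linarith

lemma digamma_four : digamma 4 = digamma 1 + 11 / 6 := by
  have := digamma_add_one (x := 3) (by norm_num)
  norm_num [digamma_three] at this ⊢
  linarith

lemma digamma_seven_sub_five : digamma 7 - digamma 5 = 11 / 30 := by
  have h5 := digamma_add_one (x := 5) (by norm_num)
  have h6 := digamma_add_one (x := 6) (by norm_num)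
  norm_num at h5 h6 ⊢
  linarith

lemma digamma_five_halves : digamma (5 / 2) = digamma (1 / 2) + 8 / 3 := by
  have h1 := digamma_add_one (x := 1 / 2) (by norm_num)
  have h2 := digamma_add_one (x := 3 / 2) (by norm_num)
  norm_num at h1 h2 ⊢
  linarith

lemma digamma_eleven_halves : digamma (11 / 2) = digamma (1 / 2) + 1126 / 315 := by
  have h1 := digamma_add_one (x := 5 / 2) (by norm_num)
  have h2 := digamma_add_one (x := 7 / 2) (by norm_num)
  have h3 := digamma_add_one (x := 9 / 2) (by norm_num)
  have h0 := digamma_five_halves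
  norm_num at h0 h1 h2 h3 ⊢
  linarith

lemma hFun_one : hFun 2 1 = 25 / 6 - 5 * Real.log 2 := by
  have h : hFun 2 1 = (5 / 2) * (digamma (5 / 2) - digamma 2) := by
    norm_num [hFun]
  rw [h, digamma_five_halves, digamma_two, digamma_one, digamma_one_half]
  ring

lemma hFun_two : hFun 2 2 = 2 / 3 := by
  have h : hFun 2 2 = 2 * (digamma 4 - digamma 3) := by
    norm_num [hFun]
  rw [h, digamma_four, digamma_three]
  ring

lemma hFun_three : hFun 2 3 = (11 / 6) * (1097 / 630 - 2 * Real.log 2) := by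
  have h : hFun 2 3 = (11 / 6) * (digamma (11 / 2) - digamma 4) := by
    norm_num [hFun]
  rw [h, digamma_eleven_halves, digamma_four, digamma_one, digamma_one_half]
  ring

lemma hFun_four : hFun 2 4 = 77 / 120 := by
  have h : hFun 2 4 = (7 / 4) * (digamma 7 - digamma 5) := by
    norm_num [hFun]
  rw [h, digamma_seven_sub_five]
  norm_num

/-- Lemma A4: for `n = 2` and `1 ≤ d ≤ 4`, there exists `ν* > 0` depending
only on `d` such that `g(2, d, ν) - h(2, d) ≥ 0` for every `0 < ν ≤ ν*`. -/
theorem stmt_7 (d : ℕ) (hd1 : 1 ≤ d) (hd4 : d ≤ 4) :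
    ∃ νstar : ℝ, 0 < νstar ∧ ∀ ν : ℝ, 0 < ν → ν ≤ νstar →
      gFun 2 d ν - hFun 2 d ≥ 0 := by
  have hlog2 := Real.log_two_gt_d9
  interval_cases d
  · refine exists_threshold (tendsto_gFun_low 1 (by norm_num) (by norm_num)) ?_
    rw [hFun_one, Nat.cast_one, digamma_one, digamma_one_half]
    linarith
  · refine exists_threshold (tendsto_gFun_low 2 (by norm_num) (by norm_num)) ?_
    have e : ((2 : ℕ) : ℝ) / 2 = 1 := by norm_num
    rw [hFun_two, e, Nat.cast_ofNat, digamma_two]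
    linarith
  · refine exists_threshold (tendsto_gFun_high 3 (by norm_num)) ?_
    rw [hFun_three]
    push_cast
    linarith
  · refine exists_threshold (tendsto_gFun_high 4 (by norm_num)) ?_
    rw [hFun_four]
    norm_num

end
end
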